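/- arXiv:2411.07275 — 2 statements merged into one kernel-verified Lean document; each statement's English description precedes it below -/
import Mathlib

section
/- The inclusion problem for erasing pattern languages with regular constraints is undecidable: for every finite alphabet Σ with |Σ| ≥ 2 there is no algorithm that, given two patterns with regular constraints (α, r_α) and (β, r_β) over Σ, decides whether L_E(α, r_α) ⊆ L_E(β, r_β). Formally, the predicate 'L_E(α, r_α) ⊆ L_E(β, r_β)' on encoded input pairs is not a computable predicate; moreover this remains true when α and β are required to be terminal-free. -/
/-- Patterns over `Σ ∪ X` with variable set `X = ℕ`. -/
abbrev Pattern (σ : Type) := List (σ ⊕ ℕ)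

/-- Terminal-free patterns: finite words over the variable set `ℕ` alone. -/
abbrev TFPattern := List ℕ

/-- Applying a substitution (determined by its action on variables, and fixing every
terminal) to a pattern. -/
def applySub {σ : Type} (s : ℕ → List σ) : Pattern σ → List σ
  | [] => []
  | c :: p => Sum.elim (fun a => [a]) s c ++ applySub s p

/-- The set of variables occurring in a pattern. -/
def varsOf {σ : Type} (p : Pattern σ) : Set ℕ := {x | Sum.inr x ∈ p}

/-- A substitution is `r`-valid on `p` if every variable occurring in `p` is mapped into
its constraint language. -/
def Valid {σ : Type} (r : ℕ → Set (List σ)) (p : Pattern σ) (s : ℕ → List σ) : Prop :=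
  ∀ x ∈ varsOf p, s x ∈ r x

/-- The erasing constrained pattern language `L_E(p, r)`. -/
def LangE {σ : Type} (p : Pattern σ) (r : ℕ → Set (List σ)) : Set (List σ) :=
  {w | ∃ s, Valid r p s ∧ applySub s p = w}

/-- A regular constraint, given as a finite association list assigning regular
expressions to finitely many variables. -/
abbrev RegConstraint (σ : Type) := List (ℕ × RegularExpression σ)

/-- The constraint described by an association list: unlisted variables are
constrained to `Σ*`. -/
def constraintOf {σ : Type} (l : RegConstraint σ) : ℕ → Set (List σ) := fun x =>
  match l.lookup x with
  | some e => (e.matches' : Set (List σ))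
  | none => Set.univ

/-- A standard injective encoding of regular expressions into `ℕ`. -/
def encRE {σ : Type} [Encodable σ] : RegularExpression σ → ℕ
  | .zero => Nat.pair 0 0
  | .epsilon => Nat.pair 1 0
  | .char a => Nat.pair 2 (Encodable.encode a)
  | .plus r s => Nat.pair 3 (Nat.pair (encRE r) (encRE s))
  | .comp r s => Nat.pair 4 (Nat.pair (encRE r) (encRE s))
  | .star r => Nat.pair 5 (encRE r)

/-- A standard encoding of an input pair `((α, r_α), (β, r_β))` into `ℕ`. -/
def encodeInput {σ : Type} [Encodable σ]
    (inp : (Pattern σ × RegConstraint σ) × (Pattern σ × RegConstraint σ)) : ℕ :=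
  Encodable.encode ((inp.1.1, inp.1.2.map fun q => (q.1, encRE q.2)),
                    (inp.2.1, inp.2.2.map fun q => (q.1, encRE q.2)))

/-- A standard encoding of a terminal-free input pair into `ℕ`. -/
def encodeTFInput {σ : Type} [Encodable σ]
    (inp : (TFPattern × RegConstraint σ) × (TFPattern × RegConstraint σ)) : ℕ :=
  Encodable.encode ((inp.1.1, inp.1.2.map fun q => (q.1, encRE q.2)),
                    (inp.2.1, inp.2.2.map fun q => (q.1, encRE q.2)))

/-!
A nondeterministic register program is a regular expression over instructions, and the set of inputs
on which some fixed program has a halting run is not computable. The trace of an alleged run lists,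
for each state, the contents of the registers as blocks `a ^ (x + 1) b ^ (d + 1)`, where `d`
identifies the register and the instruction executed next. Whether a trace obeys the control
structure of the program is a regular condition, so the constrained pattern on the left can generate
the traces of all alleged runs on a given input. Such a run is faulty if and only if, at some
instruction, two `a`-blocks at a fixed distance have lengths in the wrong relation. If the length of
the shorter one is the length of `z`, then this says that the trace factors as `u z v z x` with `v`
containing the excess of the longer block, and the factors `u`, `z`, `v`, `x` range over regular
languages. Hence the pattern `u z v z x` on the right contains the left language if and only if the
program has no halting run on the given input.
-/

namespace EPattern

/-! ### Register programs -/

/-- The contents of countably many registers. -/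
abbrev State := ℕ → ℕ

/-- A nondeterministic instruction: register `free` receives a value such that afterwards the new
value of `dst` is the old value of `src` (plus one if `inc` is set), and every other register keeps
its value. It is an assignment for `dst = free`, an arbitrary guess for `src = dst ≠ free` without
increment, and a comparison of `src` with `dst` for `free ∉ {src, dst}`. -/
structure Instr where
  free : ℕ
  src : ℕ
  dst : ℕ
  inc : Bool

namespace Instr

instance : Encodable Instr :=
  Encodable.ofLeftInverse (fun c => (c.free, c.src, c.dst, c.inc))
    (fun p => ⟨p.1, p.2.1, p.2.2.1, p.2.2.2⟩) fun _ => rfl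

/-- The transition relation of an instruction. -/
def Step (c : Instr) (s s' : State) : Prop :=
  (∀ l ≠ c.free, s' l = s l) ∧ s' c.dst = s c.src + c.inc.toNat

/-- The instruction setting register `j` to the value of register `i`, plus one if `inc` is set. -/
def assign (j i : ℕ) (inc : Bool) : Instr := ⟨j, i, j, inc⟩

theorem step_assign {j i : ℕ} {inc : Bool} {s s' : State} :
    (assign j i inc).Step s s' ↔ s' = Function.update s j (s i + inc.toNat) := by
  rw [Function.eq_update_iff, and_comm]
  rfl

end Instr

/-- `Exec l s s'` says that executing the instructions `l` in order can lead from `s` to `s'`. -/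
def Exec : List Instr → State → State → Prop
  | [], s, s' => s = s'
  | c :: l, s, s'' => ∃ s', c.Step s s' ∧ Exec l s' s''

theorem exec_singleton {c : Instr} {s s' : State} : Exec [c] s s' ↔ c.Step s s' :=
  exists_eq_right

theorem exec_append {l₁ l₂ : List Instr} {s s'' : State} :
    Exec (l₁ ++ l₂) s s'' ↔ ∃ s', Exec l₁ s s' ∧ Exec l₂ s' s'' := by
  induction l₁ generalizing s with
  | nil => simp [Exec]
  | cons c l ih =>
    simp only [List.cons_append, Exec, ih]
    exact ⟨fun ⟨x, hx, y, hy, hz⟩ => ⟨y, ⟨x, hx, hy⟩, hz⟩,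
      fun ⟨y, ⟨x, hx, hy⟩, hz⟩ => ⟨x, hx, y, hy, hz⟩⟩

/-- A program is a regular expression over instructions; a run of it executes any one of the words
it matches. -/
def Run (e : RegularExpression Instr) (s s' : State) : Prop :=
  ∃ l ∈ e.matches', Exec l s s'

theorem run_char {c : Instr} {s s' : State} : Run (.char c) s s' ↔ c.Step s s' :=
  exists_eq_left.trans exec_singleton

theorem run_one {s s' : State} : Run 1 s s' ↔ s = s' :=
  exists_eq_left

theorem run_mul {e f : RegularExpression Instr} {s s'' : State} :
    Run (e * f) s s'' ↔ ∃ s', Run e s s' ∧ Run f s' s'' := by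
  simp only [Run, RegularExpression.matches'_mul, Language.mem_mul]
  constructor
  · rintro ⟨_, ⟨l₁, h₁, l₂, h₂, rfl⟩, h⟩
    obtain ⟨s', hs, hs'⟩ := exec_append.1 h
    exact ⟨s', ⟨l₁, h₁, hs⟩, l₂, h₂, hs'⟩
  · rintro ⟨s', ⟨l₁, h₁, hs⟩, l₂, h₂, hs'⟩
    exact ⟨_, ⟨l₁, h₁, l₂, h₂, rfl⟩, exec_append.2 ⟨s', hs, hs'⟩⟩

theorem run_star {e : RegularExpression Instr} {s s' : State} :
    Run (.star e) s s' ↔ Relation.ReflTransGen (Run e) s s' := by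
  simp only [Run, RegularExpression.matches'_star, Language.mem_kstar]
  constructor
  · rintro ⟨_, ⟨L, rfl, hL⟩, h⟩
    induction L generalizing s with
    | nil =>
      obtain rfl : s = s' := h
      exact .refl
    | cons l L ih =>
      obtain ⟨t, hst, ht⟩ := exec_append.1 h
      rw [List.forall_mem_cons] at hL
      exact .head ⟨l, hL.1, hst⟩ (ih hL.2 ht)
  · intro h
    induction h using Relation.ReflTransGen.head_induction_on with
    | refl => exact ⟨[], ⟨[], rfl, by simp⟩, rfl⟩
    | head hst _ ih =>
      obtain ⟨l, hl, hst⟩ := hst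
      obtain ⟨_, ⟨L, rfl, hL⟩, ht⟩ := ih
      exact ⟨_, ⟨l :: L, rfl, List.forall_mem_cons.2 ⟨hl, hL⟩⟩, exec_append.2 ⟨_, hst, ht⟩⟩

/-- Total correctness of a program started in `s`: it has a run, and all its runs end in a state
satisfying `Q`. -/
def Ensures (e : RegularExpression Instr) (s : State) (Q : State → Prop) : Prop :=
  (∃ s', Run e s s') ∧ ∀ s', Run e s s' → Q s'

namespace Ensures

variable {e f : RegularExpression Instr} {s : State} {P Q : State → Prop}

theorem mono (h : Ensures e s P) (hPQ : ∀ t, P t → Q t) : Ensures e s Q :=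
  ⟨h.1, fun t ht => hPQ t (h.2 t ht)⟩

theorem mul (he : Ensures e s P) (hf : ∀ t, P t → Ensures f t Q) : Ensures (e * f) s Q := by
  constructor
  · obtain ⟨t, ht⟩ := he.1
    obtain ⟨u, hu⟩ := (hf t (he.2 t ht)).1
    exact ⟨u, run_mul.2 ⟨t, ht, hu⟩⟩
  · intro u h
    obtain ⟨t, ht, hu⟩ := run_mul.1 h
    exact (hf t (he.2 t ht)).2 u hu

theorem one (h : Q s) : Ensures 1 s Q :=
  ⟨⟨s, run_one.2 rfl⟩, fun _ ht => run_one.1 ht ▸ h⟩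

theorem assign {j i : ℕ} {inc : Bool} (h : Q (Function.update s j (s i + inc.toNat))) :
    Ensures (.char (.assign j i inc)) s Q := by
  simpa only [Ensures, run_char, Instr.step_assign, exists_eq, true_and, forall_eq] using h

/-- The rule for a `for` loop: the body runs until the comparison of the counter `c` with the bound
`h` succeeds. The comparison may destroy the scratch register `tmp`. -/
theorem loop {Inv : ℕ → State → Prop} {N tmp c h : ℕ} (hh : h ≠ tmp)
    (counter : ∀ k t, Inv k t → t c = k) (bound : ∀ k t, Inv k t → t h = N)
    (start : Inv 0 s) (body : ∀ k t, Inv k t → Ensures e t (Inv (k + 1)))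
    (exit : ∀ t t', Inv N t → (∀ l ≠ tmp, t' l = t l) → Q t') :
    Ensures (.star e * .char ⟨tmp, c, h, false⟩) s Q := by
  have reach : ∀ k, ∃ t, Relation.ReflTransGen (Run e) s t ∧ Inv k t := by
    intro k
    induction k with
    | zero => exact ⟨s, .refl, start⟩
    | succ k ih =>
      obtain ⟨t, hst, ht⟩ := ih
      obtain ⟨u, hu⟩ := (body k t ht).1
      exact ⟨u, hst.tail hu, (body k t ht).2 u hu⟩
  have invariant : ∀ t, Relation.ReflTransGen (Run e) s t → ∃ k, Inv k t := by
    intro t hst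
    induction hst with
    | refl => exact ⟨0, start⟩
    | tail _ htu ih =>
      obtain ⟨k, hk⟩ := ih
      exact ⟨k + 1, (body k _ hk).2 _ htu⟩
  constructor
  · obtain ⟨t, hst, ht⟩ := reach N
    refine ⟨t, run_mul.2 ⟨t, run_star.2 hst, run_char.2 ⟨fun _ _ => rfl, ?_⟩⟩⟩
    exact (bound N t ht).trans (counter N t ht).symm
  · intro u hu
    obtain ⟨t, hst, htu⟩ := run_mul.1 hu
    obtain ⟨k, hk⟩ := invariant t (run_star.1 hst)
    obtain ⟨hfree, htest⟩ := run_char.1 htu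
    obtain rfl : N = k := by
      rw [← bound k t hk, ← counter k t hk, ← hfree h hh]
      exact htest
    exact exit t u hk hfree

end Ensures

theorem map_eq_map_of_eqOn {n m : ℕ} {s t : State} {r : List.Vector ℕ n}
    (hr : ∀ i, r.get i < m) (h : Set.EqOn t s (Set.Iio m)) : r.map t = r.map s :=
  List.Vector.ext fun i => by simpa only [List.Vector.get_map] using h (hr i)

/-- `f` is computed by programs: for all argument registers `r` below `m`, some program stores the
value of `f` in register `m` and preserves the registers below `m`. Register `1` holds the constant
`0`, as instructions cannot refer to constants. -/
def Computes {n : ℕ} (f : List.Vector ℕ n → ℕ) : Prop :=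
  ∀ m, 1 < m → ∀ r : List.Vector ℕ n, (∀ i, r.get i < m) →
    ∃ e, ∀ s : State, s 1 = 0 →
      Ensures e s fun t => Set.EqOn t s (Set.Iio m) ∧ t m = f (r.map s)

theorem eqOn_update_Iio {m j x : ℕ} {s : State} (h : m ≤ j) :
    Set.EqOn (Function.update s j x) s (Set.Iio m) := fun _ hl =>
  Function.update_of_ne (hl.trans_le h).ne _ _

namespace Computes

theorem of_assign {n : ℕ} {f : List.Vector ℕ n → ℕ} (src : List.Vector ℕ n → ℕ) (inc : Bool)
    (hf : ∀ m (r : List.Vector ℕ n) (s : State), 1 < m → (∀ i, r.get i < m) → s 1 = 0 →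
      s (src r) + inc.toNat = f (r.map s)) : Computes f := by
  intro m hm r hr
  refine ⟨.char (.assign m (src r) inc), fun s hs => .assign ⟨eqOn_update_Iio le_rfl, ?_⟩⟩
  rw [Function.update_self, hf m r s hm hr hs]

theorem exists_program_forall {k n : ℕ} {g : Fin n → List.Vector ℕ k → ℕ}
    (hg : ∀ i, Computes (g i)) {m : ℕ} (hm : 1 < m) {r : List.Vector ℕ k}
    (hr : ∀ i, r.get i < m) :
    ∃ e, ∀ s : State, s 1 = 0 → Ensures e s fun t =>
      Set.EqOn t s (Set.Iio m) ∧ ∀ i : Fin n, t (m + i) = g i (r.map s) := by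
  induction n with
  | zero => exact ⟨1, fun s _ => .one ⟨Set.eqOn_refl _ _, nofun⟩⟩
  | succ n ih =>
    obtain ⟨e, he⟩ := ih fun i => hg i.castSucc
    obtain ⟨e', he'⟩ := hg (Fin.last n) (m + n) (by lia) r fun i => (hr i).trans_le (by lia)
    refine ⟨e * e', fun s hs => (he s hs).mul fun t ⟨hts, ht⟩ => ?_⟩
    refine (he' t ((hts hm).trans hs)).mono fun u ⟨hut, hu⟩ => ⟨?_, ?_⟩
    · exact (hut.mono (Set.Iio_subset_Iio (by lia))).trans hts
    · intro i
      cases i using Fin.lastCases with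
      | last => rwa [map_eq_map_of_eqOn hr hts] at hu
      | cast i => rw [Fin.val_castSucc, hut (by simp), ← ht i]

theorem comp {k n : ℕ} {f : List.Vector ℕ n → ℕ} {g : Fin n → List.Vector ℕ k → ℕ}
    (hf : Computes f) (hg : ∀ i, Computes (g i)) :
    Computes fun v => f (List.Vector.ofFn fun i => g i v) := by
  intro m hm r hr
  obtain ⟨e, he⟩ := exists_program_forall hg hm hr
  obtain ⟨e', he'⟩ := hf (m + n) (by lia) (List.Vector.ofFn fun i => m + i) (by simp)
  refine ⟨e * (e' * .char (.assign m (m + n) false)), fun s hs => ?_⟩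
  refine (he s hs).mul fun t ⟨hts, ht⟩ => ?_
  refine (he' t ((hts hm).trans hs)).mul fun u ⟨hut, hu⟩ => .assign ⟨?_, ?_⟩
  · exact (eqOn_update_Iio le_rfl).trans
      ((hut.mono (Set.Iio_subset_Iio (by lia))).trans hts)
  · have args : (List.Vector.ofFn fun i : Fin n => m + i).map t =
        List.Vector.ofFn fun i => g i (r.map s) :=
      List.Vector.ext fun i => by simp [ht]
    rw [Function.update_self, hu, args]
    rfl

theorem exists_program_recStep {n m : ℕ} {g : List.Vector ℕ (n + 2) → ℕ} (hg : Computes g)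
    {r : List.Vector ℕ n} (hr : ∀ i, r.get i < m) :
    ∃ e, ∀ s : State, s 1 = 0 → Ensures e s fun t => Set.EqOn t s (Set.Iio m) ∧
      t m = g (s (m + 1) ::ᵥ s m ::ᵥ r.map s) ∧ t (m + 1) = s (m + 1) + 1 := by
  obtain ⟨e, he⟩ := hg (m + 2) (by lia) ((m + 1) ::ᵥ m ::ᵥ r) <| by
    simp only [Fin.forall_fin_succ, List.Vector.get_cons_zero, List.Vector.get_cons_succ]
    exact ⟨by lia, by lia, fun i => (hr i).trans (by lia)⟩
  refine ⟨e * (.char (.assign m (m + 2) false) * .char (.assign (m + 1) (m + 1) true)),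
    fun s hs => (he s hs).mul fun t ⟨hts, ht⟩ => .mul (.assign rfl) ?_⟩
  rintro _ rfl
  refine .assign ⟨?_, ?_, ?_⟩
  · exact (eqOn_update_Iio (by lia)).trans ((eqOn_update_Iio le_rfl).trans
      (hts.mono (Set.Iio_subset_Iio (by lia))))
  · rw [Function.update_of_ne (by lia), Function.update_self, ht, List.Vector.map_cons,
      List.Vector.map_cons]
    rfl
  · rw [Function.update_self, Function.update_of_ne (by lia), hts (by simp)]
    rfl

theorem prec {n : ℕ} {f : List.Vector ℕ n → ℕ} {g : List.Vector ℕ (n + 2) → ℕ}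
    (hf : Computes f) (hg : Computes g) :
    Computes fun v : List.Vector ℕ (n + 1) =>
      v.head.rec (f v.tail) fun y IH => g (y ::ᵥ IH ::ᵥ v.tail) := by
  intro m hm r hr
  have hhead : r.head < m := List.Vector.get_zero r ▸ hr 0
  have htail : ∀ i, r.tail.get i < m := fun i => List.Vector.get_tail_succ r i ▸ hr i.succ
  obtain ⟨e, he⟩ := hf m hm r.tail htail
  obtain ⟨body, hbody⟩ := hg.exists_program_recStep htail
  refine ⟨e * (.char (.assign (m + 1) 1 false) *
    (.star body * .char ⟨m + 2, m + 1, r.head, false⟩)), fun s hs => ?_⟩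
  let val : ℕ → ℕ := Nat.rec (f (r.tail.map s)) fun y IH => g (y ::ᵥ IH ::ᵥ r.tail.map s)
  let Inv (k : ℕ) (t : State) : Prop := Set.EqOn t s (Set.Iio m) ∧ t m = val k ∧ t (m + 1) = k
  refine (he s hs).mul fun t ⟨hts, ht⟩ => Ensures.mul (P := Inv 0) (.assign ⟨?_, ?_, ?_⟩) ?_
  · exact (eqOn_update_Iio (by lia)).trans hts
  · rw [Function.update_of_ne (by lia), ht]
    rfl
  · rw [Function.update_self, hts hm, hs]
    rfl
  · refine fun t ht => Ensures.loop (N := s r.head) (Inv := Inv) (by lia) (fun _ _ h => h.2.2)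
      (fun _ _ h => h.1 hhead) ht ?_ ?_
    · rintro k t ⟨hts, hacc, hcount⟩
      refine (hbody t ((hts hm).trans hs)).mono fun u ⟨hut, hu, hu'⟩ => ⟨hut.trans hts, ?_, ?_⟩
      · rw [hu, hcount, hacc, map_eq_map_of_eqOn htail hts]
      · rw [hu', hcount]
    · rintro t t' ⟨hts, hacc, -⟩ ht'
      refine ⟨fun l hl => (ht' l (Set.mem_Iio.1 hl |>.trans (by lia)).ne).trans (hts hl), ?_⟩
      simp only [ht' m (by lia), hacc, List.Vector.head_map, List.Vector.tail_map, val]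

end Computes

theorem computes_of_primrec' {n : ℕ} {f : List.Vector ℕ n → ℕ} (hf : Nat.Primrec' f) :
    Computes f := by
  induction hf with
  | zero => exact .of_assign (fun _ => 1) false fun _ _ _ _ _ hs => hs
  | succ =>
    refine .of_assign List.Vector.head true fun _ r s _ _ _ => ?_
    rw [List.Vector.head_map]
    rfl
  | get i => exact .of_assign (fun r => r.get i) false fun _ r s _ _ _ => by simp
  | comp g _ _ hf hg => exact hf.comp hg
  | prec _ _ hf hg => exact hf.prec hg

/-- Guess an arbitrary value for register `2`. -/
def guess : Instr := ⟨2, 0, 0, false⟩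

theorem step_guess {s s' : State} : guess.Step s s' ↔ ∀ l ≠ 2, s' l = s l :=
  ⟨fun h => h.1, fun h => ⟨h, h 0 (by decide)⟩⟩

/-- The inputs `n` on which the program that guesses register `2` and then runs `e` can halt.
Initially register `0` holds the input and register `1` the constant `0`. -/
def Halts (e : RegularExpression Instr) (n : ℕ) : Prop :=
  ∃ s s', s 0 = n ∧ s 1 = 0 ∧ Run (.char guess * e) s s'

theorem exists_halts_iff {f : ℕ → ℕ → ℕ} (hf : Primrec₂ f) :
    ∃ e, ∀ n, Halts e n ↔ ∃ k, f n k = 0 := by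
  obtain ⟨e, he⟩ := computes_of_primrec' (Nat.Primrec'.prim_iff₂.2 hf) 3 (by decide)
    (0 ::ᵥ 2 ::ᵥ .nil) (by decide)
  let test : RegularExpression Instr := .char ⟨4, 3, 1, false⟩
  have halts_from (s : State) (hs : s 1 = 0) : (∃ s', Run (e * test) s s') ↔ f (s 0) (s 2) = 0 := by
    obtain ⟨⟨t, hst⟩, ht⟩ := he s hs
    simp only [run_mul]
    constructor
    · rintro ⟨s', t, hst, hts'⟩
      obtain ⟨hts, hval⟩ := ht t hst
      obtain ⟨hfree, htest⟩ := run_char.1 hts'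
      calc f (s 0) (s 2) = t 3 := hval.symm
        _ = s' 1 := htest.symm
        _ = t 1 := hfree 1 (by decide)
        _ = 0 := (hts (by decide)).trans hs
    · intro hf
      obtain ⟨hts, hval⟩ := ht t hst
      refine ⟨t, t, hst, run_char.2 ⟨fun _ _ => rfl, ?_⟩⟩
      exact ((hts (by decide)).trans hs).trans (hval.trans hf).symm
  refine ⟨e * test, fun n => ⟨?_, ?_⟩⟩
  · rintro ⟨s, s', rfl, hs, h⟩
    obtain ⟨t, hst, hts'⟩ := run_mul.1 h
    have hts := step_guess.1 (run_char.1 hst)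
    rw [← hts 0 (by decide)]
    exact ⟨t 2, (halts_from t ((hts 1 (by decide)).trans hs)).1 ⟨s', hts'⟩⟩
  · rintro ⟨k, hk⟩
    let s : State := fun | 0 => n | 2 => k | _ => 0
    obtain ⟨s', hs'⟩ := (halts_from s rfl).2 hk
    exact ⟨s, s', rfl, rfl, run_mul.2 ⟨s, run_char.2 (step_guess.2 fun _ _ => rfl), hs'⟩⟩

theorem exists_not_computablePred_halts : ∃ e, ¬ ComputablePred (Halts e) := by
  let evalnAt (n k : ℕ) : Option ℕ := (Denumerable.ofNat Nat.Partrec.Code n).evaln k 0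
  let f (n k : ℕ) : ℕ := if (evalnAt n k).isSome then 0 else 1
  have hf : Primrec₂ f := by
    have hevaln : Primrec fun p : ℕ × ℕ => evalnAt p.1 p.2 :=
      Nat.Partrec.Code.primrec_evaln.comp
        ((Primrec.snd.pair ((Primrec.ofNat _).comp Primrec.fst)).pair (Primrec.const 0))
    exact Primrec.ite (Primrec.eq.comp (Primrec.option_isSome.comp hevaln) (Primrec.const true))
      (Primrec.const 0) (Primrec.const 1)
  obtain ⟨e, he⟩ := exists_halts_iff hf
  refine ⟨e, fun h => ComputablePred.halting_problem 0 ?_⟩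
  refine ComputablePred.computable_of_manyOneReducible
    ⟨Encodable.encode, Computable.encode, fun c => ?_⟩ h
  calc (c.eval 0).Dom ↔ ∃ x k, x ∈ c.evaln k 0 := by
        simp only [Part.dom_iff_mem, Nat.Partrec.Code.evaln_complete]
    _ ↔ ∃ k, f (Encodable.encode c) k = 0 := by
        rw [exists_comm]
        simp [f, evalnAt, Option.isSome_iff_exists]
    _ ↔ Halts e (Encodable.encode c) := (he _).symm

/-! ### Words over two letters and regular expressions -/

section Words

variable {σ : Type*} (a b : σ)

/-- The word of a list of tokens: the token `(x, d)` is written `a ^ (x + 1) b ^ (d + 1)`. Its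
`a`-block carries the number `x` and its `b`-block the label `d`. -/
def tokenWord (T : List (ℕ × ℕ)) : List σ :=
  T.flatMap fun t => List.replicate (t.1 + 1) a ++ List.replicate (t.2 + 1) b

theorem tokenWord_cons (t : ℕ × ℕ) (T : List (ℕ × ℕ)) :
    tokenWord a b (t :: T) =
      List.replicate (t.1 + 1) a ++ (List.replicate (t.2 + 1) b ++ tokenWord a b T) := by
  rw [tokenWord, List.flatMap_cons, List.append_assoc, tokenWord]

theorem tokenWord_append (T T' : List (ℕ × ℕ)) :
    tokenWord a b (T ++ T') = tokenWord a b T ++ tokenWord a b T' :=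
  List.flatMap_append

variable {a b}

theorem replicate_append_inj {c : σ} {m n : ℕ} {u v : List σ} (hu : u.head? ≠ some c)
    (hv : v.head? ≠ some c) (h : List.replicate m c ++ u = List.replicate n c ++ v) :
    m = n ∧ u = v := by
  induction m generalizing n with
  | zero =>
    cases n with
    | zero => exact ⟨rfl, h⟩
    | succ n => subst h; simp [List.replicate_succ] at hu
  | succ m ih =>
    cases n with
    | zero => subst h; simp [List.replicate_succ] at hv
    | succ n => simpa using ih (by simpa [List.replicate_succ] using h)

theorem tokenWord_injective (hab : a ≠ b) : Function.Injective (tokenWord a b) := by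
  have head_ne (T : List (ℕ × ℕ)) : (tokenWord a b T).head? ≠ some b := by
    cases T <;> simp [tokenWord, List.replicate_succ, hab]
  intro T
  induction T with
  | nil => rintro (_ | _) h <;> simp [tokenWord, List.replicate_succ] at h ⊢
  | cons t T ih =>
    rintro (_ | ⟨t', T'⟩) h
    · simp [tokenWord, List.replicate_succ] at h
    · rw [tokenWord_cons, tokenWord_cons] at h
      obtain ⟨h₁, h⟩ := replicate_append_inj (by simp [List.replicate_succ, hab.symm])
        (by simp [List.replicate_succ, hab.symm]) h
      obtain ⟨h₂, h⟩ := replicate_append_inj (head_ne T) (head_ne T') h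
      rw [ih h, Prod.ext (Nat.succ.inj h₁) (Nat.succ.inj h₂)]

/-- The regular expression for `c ^ m` with `m ≥ k`. -/
def atLeast (c : σ) (k : ℕ) : RegularExpression σ := .char c ^ k * .star (.char c)

theorem mem_char_pow {c : σ} {k : ℕ} {w : List σ} :
    w ∈ (RegularExpression.char c ^ k).matches' ↔ w = List.replicate k c := by
  rw [RegularExpression.matches'_pow, Language.mem_pow]
  simp only [RegularExpression.matches'_char]
  constructor
  · rintro ⟨S, rfl, rfl, hS⟩
    rw [List.eq_replicate_of_mem hS]
    simp
  · rintro rfl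
    exact ⟨List.replicate k [c], by simp, by simp, fun y hy => List.eq_of_mem_replicate hy⟩

theorem mem_star {e : RegularExpression σ} {w : List σ} :
    w ∈ (RegularExpression.star e).matches' ↔ ∃ k, w ∈ (e ^ k).matches' := by
  simp only [RegularExpression.matches'_star, RegularExpression.matches'_pow,
    Language.kstar_eq_iSup_pow, Language.mem_iSup]

theorem mem_mul {e f : RegularExpression σ} {w : List σ} :
    w ∈ (e * f).matches' ↔ ∃ u ∈ e.matches', ∃ v ∈ f.matches', u ++ v = w := by
  rw [RegularExpression.matches'_mul, Language.mem_mul]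

theorem mem_atLeast {c : σ} {k : ℕ} {w : List σ} :
    w ∈ (atLeast c k).matches' ↔ ∃ m, w = List.replicate (m + k) c := by
  simp only [atLeast, mem_mul, mem_star, mem_char_pow, exists_eq_left, ↓existsAndEq, true_and,
    List.replicate_append_replicate, add_comm, eq_comm]

theorem mem_sum {es : List (RegularExpression σ)} {w : List σ} :
    w ∈ es.sum.matches' ↔ ∃ e ∈ es, w ∈ e.matches' := by
  induction es with
  | nil => simp [← RegularExpression.zero_def, Language.notMem_zero]
  | cons e es ih =>
    rw [List.sum_cons, RegularExpression.matches'_add, Language.mem_add, ih]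
    simp only [List.mem_cons, exists_eq_or_imp]

/-- The regular expression for the token lists with the prescribed labels. -/
def tokensRE (a b : σ) (ds : List ℕ) : RegularExpression σ :=
  (ds.map fun d => atLeast a 1 * .char b ^ (d + 1)).prod

theorem mem_tokensRE {ds : List ℕ} {w : List σ} :
    w ∈ (tokensRE a b ds).matches' ↔
      ∃ T : List (ℕ × ℕ), T.map Prod.snd = ds ∧ w = tokenWord a b T := by
  induction ds generalizing w with
  | nil => simp [tokensRE, tokenWord, ← RegularExpression.one_def, Language.mem_one]
  | cons d ds ih =>
    have : tokensRE a b (d :: ds) = atLeast a 1 * .char b ^ (d + 1) * tokensRE a b ds := rfl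
    simp only [this, mem_mul, mem_atLeast, mem_char_pow, ih]
    constructor
    · rintro ⟨_, ⟨_, ⟨x, rfl⟩, _, rfl, rfl⟩, _, ⟨T, rfl, rfl⟩, rfl⟩
      exact ⟨(x, d) :: T, rfl, by rw [tokenWord_cons, List.append_assoc]⟩
    · rintro ⟨T, hT, rfl⟩
      obtain ⟨⟨x, _⟩, T, rfl, rfl, rfl⟩ := List.map_eq_cons_iff.1 hT
      exact ⟨_, ⟨_, ⟨x, rfl⟩, _, rfl, rfl⟩, _, ⟨T, rfl, rfl⟩, by
        rw [tokenWord_cons, List.append_assoc]⟩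

/-- The regular expression for a single token. -/
def tokenRE (a b : σ) : RegularExpression σ := atLeast a 1 * atLeast b 1

theorem mem_tokenRE {w : List σ} : w ∈ (tokenRE a b).matches' ↔
    ∃ x d, w = List.replicate (x + 1) a ++ List.replicate (d + 1) b := by
  simp only [tokenRE, mem_mul, mem_atLeast, ↓existsAndEq, true_and, eq_comm]

theorem mem_tokenRE_pow {k : ℕ} {w : List σ} :
    w ∈ (tokenRE a b ^ k).matches' ↔ ∃ T : List (ℕ × ℕ), T.length = k ∧ w = tokenWord a b T := by
  induction k generalizing w with
  | zero => simp [tokenWord, Language.mem_one]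
  | succ k ih =>
    simp only [RegularExpression.matches'_pow] at ih
    simp only [RegularExpression.matches'_pow, pow_succ', Language.mem_mul, ih, mem_tokenRE]
    constructor
    · rintro ⟨_, ⟨x, d, rfl⟩, _, ⟨T, rfl, rfl⟩, rfl⟩
      exact ⟨(x, d) :: T, rfl, by rw [tokenWord_cons, List.append_assoc]⟩
    · rintro ⟨T, hT, rfl⟩
      obtain ⟨⟨x, d⟩, T, rfl⟩ := List.exists_cons_of_length_eq_add_one hT
      exact ⟨_, ⟨x, d, rfl⟩, _, ⟨T, Nat.succ.inj hT, rfl⟩, by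
        rw [tokenWord_cons, List.append_assoc]⟩

theorem mem_star_tokenRE {w : List σ} :
    w ∈ (RegularExpression.star (tokenRE a b)).matches' ↔ ∃ T, w = tokenWord a b T := by
  simp only [mem_star, mem_tokenRE_pow, ↓existsAndEq, true_and]

/-- Some token with label `d` carries a number `x`, and the token `δ + 1` places to its right
carries a number different from `x` (from `x + 1` if `inc` is set). -/
def Mismatch (d δ : ℕ) (inc : Bool) (T : List (ℕ × ℕ)) : Prop :=
  ∃ p x y d', T[p]? = some (x, d) ∧ T[p + δ + 1]? = some (y, d') ∧ y ≠ x + inc.toNat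

theorem getElem?_eq_some_iff_exists_append {α : Type*} {l : List α} {p : ℕ} {x : α} :
    l[p]? = some x ↔ ∃ l₁ l₂, l = l₁ ++ x :: l₂ ∧ l₁.length = p := by
  constructor
  · intro h
    obtain ⟨hp, rfl⟩ := List.getElem?_eq_some_iff.1 h
    exact ⟨l.take p, l.drop (p + 1), by simp, by simpa using hp.le⟩
  · rintro ⟨l₁, l₂, rfl, rfl⟩
    simp

theorem mismatch_iff {d δ : ℕ} {inc : Bool} {T : List (ℕ × ℕ)} :
    Mismatch d δ inc T ↔ ∃ T₁ x S y d' T₂, T = T₁ ++ (x, d) :: (S ++ (y, d') :: T₂) ∧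
      S.length = δ ∧ y ≠ x + inc.toNat := by
  constructor
  · rintro ⟨p, x, y, d', h₁, h₂, hne⟩
    obtain ⟨T₁, T', rfl, rfl⟩ := getElem?_eq_some_iff_exists_append.1 h₁
    have h₂ : T'[δ]? = some (y, d') := by
      rw [← h₂, List.getElem?_append_right (by lia)]
      simp [add_assoc]
    obtain ⟨S, T₂, rfl, hS⟩ := getElem?_eq_some_iff_exists_append.1 h₂
    exact ⟨T₁, x, S, y, d', T₂, rfl, hS, hne⟩
  · rintro ⟨T₁, x, S, y, d', T₂, rfl, rfl, hne⟩
    refine ⟨T₁.length, x, y, d', by simp, ?_, hne⟩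
    rw [List.getElem?_append_right (by lia)]
    simp [add_assoc]

/-- The middle factor `v` of a factorization `u z v z x` witnessing a mismatch. Since `z` is a power
of `a` of the length of the shorter one of the two `a`-blocks compared, `v` contains the excess of
the longer one. -/
def mismatchRE (a b : σ) (d δ : ℕ) (inc : Bool) : RegularExpression σ :=
  .char b ^ (d + 1) * tokenRE a b ^ δ * atLeast a (inc.toNat + 1) +
    atLeast a (1 - inc.toNat) * (.char b ^ (d + 1) * tokenRE a b ^ δ)

theorem mem_mismatchRE {d δ : ℕ} {inc : Bool} {w : List σ} :
    w ∈ (mismatchRE a b d δ inc).matches' ↔ ∃ S : List (ℕ × ℕ), S.length = δ ∧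
      ((∃ k, w = List.replicate (d + 1) b ++
          (tokenWord a b S ++ List.replicate (k + (inc.toNat + 1)) a)) ∨
        ∃ k, w = List.replicate (k + (1 - inc.toNat)) a ++
          (List.replicate (d + 1) b ++ tokenWord a b S)) := by
  rw [mismatchRE, RegularExpression.matches'_add, Language.mem_add]
  simp only [mem_mul, mem_atLeast, mem_tokenRE_pow, mem_char_pow]
  constructor
  · rintro (⟨_, ⟨_, rfl, _, ⟨S, hS, rfl⟩, rfl⟩, _, ⟨k, rfl⟩, rfl⟩ |
      ⟨_, ⟨k, rfl⟩, _, ⟨_, rfl, _, ⟨S, hS, rfl⟩, rfl⟩, rfl⟩)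
    · exact ⟨S, hS, .inl ⟨k, by rw [List.append_assoc]⟩⟩
    · exact ⟨S, hS, .inr ⟨k, rfl⟩⟩
  · rintro ⟨S, hS, ⟨k, rfl⟩ | ⟨k, rfl⟩⟩
    · exact .inl ⟨_, ⟨_, rfl, _, ⟨S, hS, rfl⟩, rfl⟩, _, ⟨k, rfl⟩, by rw [List.append_assoc]⟩
    · exact .inr ⟨_, ⟨k, rfl⟩, _, ⟨_, rfl, _, ⟨S, hS, rfl⟩, rfl⟩, rfl⟩

theorem replicate_append_replicate_append {c : σ} {m n : ℕ} {w : List σ} :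
    List.replicate m c ++ (List.replicate n c ++ w) = List.replicate (m + n) c ++ w := by
  rw [← List.append_assoc, List.replicate_append_replicate]

theorem exists_factorization_iff_mismatch (hab : a ≠ b) {d δ : ℕ} {inc : Bool}
    {T : List (ℕ × ℕ)} :
    (∃ u ∈ (RegularExpression.star (tokenRE a b)).matches', ∃ z ∈ (atLeast a 1).matches',
      ∃ v ∈ (mismatchRE a b d δ inc).matches',
      ∃ x ∈ (atLeast b 1 * .star (tokenRE a b)).matches',
        u ++ (z ++ (v ++ (z ++ x))) = tokenWord a b T) ↔ Mismatch d δ inc T := by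
  simp only [mem_star_tokenRE, mem_atLeast, mem_mismatchRE, mem_mul, mismatch_iff]
  have hinc := Bool.toNat_le inc
  constructor
  · rintro ⟨_, ⟨T₁, rfl⟩, _, ⟨i, rfl⟩, _, ⟨S, hS, ⟨k, rfl⟩ | ⟨k, rfl⟩⟩, _,
      ⟨_, ⟨d', rfl⟩, _, ⟨T₂, rfl⟩, rfl⟩, h⟩
    · refine ⟨T₁, i, S, k + inc.toNat + 1 + i, d', T₂, tokenWord_injective hab ?_, hS, by lia⟩
      rw [← h]
      simp only [tokenWord_append, tokenWord_cons, List.append_assoc,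
        replicate_append_replicate_append, add_assoc]
    · refine ⟨T₁, i + (k + (1 - inc.toNat)), S, i, d', T₂, tokenWord_injective hab ?_, hS, by lia⟩
      rw [← h]
      simp only [tokenWord_append, tokenWord_cons, List.append_assoc,
        replicate_append_replicate_append, add_right_comm]
  · rintro ⟨T₁, x, S, y, d', T₂, rfl, hS, hne⟩
    rcases lt_or_gt_of_ne hne with hlt | hgt
    · obtain ⟨k, rfl⟩ : ∃ k, x = y + (k + (1 - inc.toNat)) := ⟨x - y - (1 - inc.toNat), by lia⟩
      refine ⟨_, ⟨T₁, rfl⟩, _, ⟨y, rfl⟩, _, ⟨S, hS, .inr ⟨k, rfl⟩⟩, _,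
        ⟨_, ⟨d', rfl⟩, _, ⟨T₂, rfl⟩, rfl⟩, ?_⟩
      simp only [tokenWord_append, tokenWord_cons, List.append_assoc,
        replicate_append_replicate_append, add_right_comm]
    · obtain ⟨k, rfl⟩ : ∃ k, y = k + inc.toNat + 1 + x := ⟨y - x - inc.toNat - 1, by lia⟩
      refine ⟨_, ⟨T₁, rfl⟩, _, ⟨x, rfl⟩, _, ⟨S, hS, .inl ⟨k, rfl⟩⟩, _,
        ⟨_, ⟨d', rfl⟩, _, ⟨T₂, rfl⟩, rfl⟩, ?_⟩
      simp only [tokenWord_append, tokenWord_cons, List.append_assoc,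
        replicate_append_replicate_append, add_assoc]

end Words

/-! ### Substitution in regular expressions -/

section Subst

variable {α β γ : Type*}

/-- The regular expression obtained by replacing every letter `c` by the expression `f c`. -/
def substRE (f : α → RegularExpression β) : RegularExpression α → RegularExpression β
  | .zero => .zero
  | .epsilon => .epsilon
  | .char c => f c
  | .plus e e' => .plus (substRE f e) (substRE f e')
  | .comp e e' => .comp (substRE f e) (substRE f e')
  | .star e => .star (substRE f e)

/-- `Represents π g E e` says that `E` matches exactly the words `L.flatMap g` for the lists `L`
whose image under `π` is matched by `e`. -/
def Represents (π : γ → α) (g : γ → List β) (E : RegularExpression β) (e : RegularExpression α) :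
    Prop :=
  ∀ w, w ∈ E.matches' ↔ ∃ L : List γ, L.map π ∈ e.matches' ∧ w = L.flatMap g

namespace Represents

variable {π : γ → α} {g : γ → List β} {E E' : RegularExpression β} {e e' : RegularExpression α}

theorem one : Represents π g 1 1 := by
  simp [Represents, Language.mem_one]

theorem add (h : Represents π g E e) (h' : Represents π g E' e') :
    Represents π g (E + E') (e + e') := by
  intro w
  simp only [RegularExpression.matches'_add, Language.mem_add, h w, h' w, or_and_right, exists_or]

theorem mul (h : Represents π g E e) (h' : Represents π g E' e') :
    Represents π g (E * E') (e * e') := by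
  intro w
  simp only [mem_mul, h _, h' _]
  constructor
  · rintro ⟨_, ⟨L, hL, rfl⟩, _, ⟨L', hL', rfl⟩, rfl⟩
    exact ⟨L ++ L', ⟨_, hL, _, hL', List.map_append.symm⟩, List.flatMap_append.symm⟩
  · rintro ⟨L, ⟨_, hl, _, hl', hL⟩, rfl⟩
    obtain ⟨L, L', rfl, rfl, rfl⟩ := List.map_eq_append_iff.1 hL.symm
    exact ⟨_, ⟨L, hl, rfl⟩, _, ⟨L', hl', rfl⟩, List.flatMap_append.symm⟩

theorem pow (h : Represents π g E e) : ∀ k, Represents π g (E ^ k) (e ^ k)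
  | 0 => one
  | k + 1 => (h.pow k).mul h

theorem star (h : Represents π g E e) : Represents π g (.star E) (.star e) := by
  intro w
  simp only [mem_star, h.pow _ w, ← exists_and_right]
  exact exists_comm

theorem subst {f : α → RegularExpression β}
    (hf : ∀ c w, w ∈ (f c).matches' ↔ ∃ p, π p = c ∧ w = g p) (e : RegularExpression α) :
    Represents π g (substRE f e) e := by
  induction e with
  | zero => exact fun w => ⟨False.elim, fun ⟨_, h, _⟩ => h.elim⟩
  | epsilon => exact one
  | char c =>
    intro w
    rw [substRE, hf]
    constructor
    · rintro ⟨p, rfl, rfl⟩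
      exact ⟨[p], rfl, by simp⟩
    · rintro ⟨L, hL, rfl⟩
      obtain ⟨p, rfl, rfl⟩ := List.map_eq_singleton_iff.1 hL
      exact ⟨p, rfl, by simp⟩
  | plus _ _ ih ih' => exact ih.add ih'
  | comp _ _ ih ih' => exact ih.mul ih'
  | star _ ih => exact ih.star

end Represents

theorem exists_alphabet (e : RegularExpression α) :
    ∃ A : List α, ∀ w ∈ e.matches', ∀ c ∈ w, c ∈ A := by
  induction e with
  | zero => exact ⟨[], fun w hw => hw.elim⟩
  | epsilon =>
    refine ⟨[], fun w hw => ?_⟩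
    obtain rfl : w = [] := hw
    simp
  | char c =>
    refine ⟨[c], fun w hw => ?_⟩
    obtain rfl : w = [c] := hw
    simp
  | plus e e' ih ih' =>
    obtain ⟨A, hA⟩ := ih
    obtain ⟨A', hA'⟩ := ih'
    refine ⟨A ++ A', fun w hw c hc => List.mem_append.2 ?_⟩
    exact hw.imp (hA w · c hc) (hA' w · c hc)
  | comp e e' ih ih' =>
    obtain ⟨A, hA⟩ := ih
    obtain ⟨A', hA'⟩ := ih'
    refine ⟨A ++ A', fun w hw c hc => List.mem_append.2 ?_⟩
    obtain ⟨u, hu, v, hv, rfl⟩ := mem_mul.1 hw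
    exact (List.mem_append.1 hc).imp (hA u hu c) (hA' v hv c)
  | star e ih =>
    obtain ⟨A, hA⟩ := ih
    refine ⟨A, ?_⟩
    rintro _ ⟨L, rfl, hL⟩ c hc
    obtain ⟨w, hw, hcw⟩ := List.mem_flatten.1 hc
    exact hA w (hL w hw) c hcw

end Subst

/-! ### Traces -/

section Trace

/-- `StepBelow K c s s'` is the transition relation of `c` restricted to the registers below
`K`. -/
def StepBelow (K : ℕ) (c : Instr) (s s' : State) : Prop :=
  (∀ l < K, l ≠ c.free → s' l = s l) ∧ s' c.dst = s c.src + c.inc.toNat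

theorem Instr.Step.stepBelow {K : ℕ} {c : Instr} {s s' : State} (h : c.Step s s') :
    StepBelow K c s s' :=
  ⟨fun l _ => h.1 l, h.2⟩

namespace StepBelow

variable {K : ℕ} {c : Instr} {s s' t : State}

theorem congr_left (h : StepBelow K c s s') (hc : c.src < K) (hts : Set.EqOn t s (Set.Iio K)) :
    StepBelow K c t s' :=
  ⟨fun l hl hne => (h.1 l hl hne).trans (hts hl).symm, by rw [h.2, hts hc]⟩

theorem exists_step (h : StepBelow K c s s') (hc : c.dst < K) :
    ∃ t, c.Step s t ∧ Set.EqOn t s' (Set.Iio K) := by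
  refine ⟨fun l => if l < K ∨ l = c.free then s' l else s l, ⟨fun l hl => ?_, ?_⟩, fun l hl => ?_⟩
  · by_cases hlK : l < K
    · simpa [hlK] using h.1 l hlK hl
    · simp [hlK, hl]
  · simpa [hc] using h.2
  · exact if_pos (.inl hl)

/-- The equations `s' j = s i + inc` that express `StepBelow K c s s'`, as triples `(i, j, inc)`. -/
def checks (K : ℕ) (c : Instr) : List (ℕ × ℕ × Bool) :=
  (c.src, c.dst, c.inc) :: ((List.range K).filter (· ≠ c.free)).map fun l => (l, l, false)

theorem iff_checks :
    StepBelow K c s s' ↔ ∀ q ∈ checks K c, s' q.2.1 = s q.1 + q.2.2.toNat := by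
  simp only [StepBelow, checks, List.forall_mem_cons, List.forall_mem_map, List.mem_filter,
    List.mem_range, decide_eq_true_eq, and_imp, Bool.toNat_false, add_zero, and_comm]
  exact and_congr_right fun _ => forall_congr' fun _ => imp.swap

theorem lt_of_mem_checks (hc : c.src < K ∧ c.dst < K) {q : ℕ × ℕ × Bool} (hq : q ∈ checks K c) :
    q.1 < K ∧ q.2.1 < K := by
  simp only [checks, List.mem_cons, List.mem_map, List.mem_filter, List.mem_range] at hq
  obtain rfl | ⟨l, ⟨hl, -⟩, rfl⟩ := hq
  exacts [hc, ⟨hl, hl⟩]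

end StepBelow

theorem exists_exec_iff_exists_isChain {K : ℕ} {c : Instr} {l : List Instr}
    (hl : ∀ d ∈ c :: l, d.src < K ∧ d.dst < K) (last : Instr) {s : State} :
    (∃ s', Exec (c :: l) s s') ↔ ∃ L : List (State × Instr), L.map Prod.snd = l ++ [last] ∧
      List.IsChain (fun p q => StepBelow K p.2 p.1 q.1) ((s, c) :: L) := by
  have hc := hl c List.mem_cons_self
  induction l generalizing c s with
  | nil =>
    simp only [exec_singleton, List.nil_append, List.map_eq_singleton_iff]
    constructor
    · rintro ⟨s', h⟩
      exact ⟨_, ⟨(s', last), rfl, rfl⟩, .cons_cons h.stepBelow (.singleton _)⟩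
    · rintro ⟨_, ⟨p, rfl, -⟩, h⟩
      obtain ⟨t, ht, -⟩ := (List.isChain_cons_cons.1 h).1.exists_step hc.2
      exact ⟨t, ht⟩
  | cons d l ih =>
    have hl := (List.forall_mem_cons.1 hl).2
    have hd := hl d List.mem_cons_self
    constructor
    · rintro ⟨s', t, hst, ht⟩
      obtain ⟨L, hL, hchain⟩ := (ih hl hd).1 ⟨s', ht⟩
      exact ⟨(t, d) :: L, by simp [hL], .cons_cons hst.stepBelow hchain⟩
    · rintro ⟨_, hL, hchain⟩
      obtain ⟨⟨t', d⟩, L, rfl, rfl, hLl⟩ := List.map_eq_cons_iff.1 hL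
      obtain ⟨hst', hchain⟩ := List.isChain_cons_cons.1 hchain
      obtain ⟨t, hst, htt'⟩ := hst'.exists_step hc.2
      have hchain : List.IsChain (fun p q => StepBelow K p.2 p.1 q.1) ((t, d) :: L) := by
        rw [List.isChain_cons] at hchain ⊢
        exact ⟨fun q hq => (hchain.1 q hq).congr_left hd.1 htt', hchain.2⟩
      obtain ⟨s', hs'⟩ := (ih (s := t) hl hd).2 ⟨L, hLl, hchain⟩
      exact ⟨s', t, hst, hs'⟩

/-- The label of the token for register `l` in a record of the instruction `c`. -/
def label (c : Instr) (l : ℕ) : ℕ := Encodable.encode (c, l)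

theorem label_inj {c d : Instr} {i j : ℕ} : label c i = label d j ↔ c = d ∧ i = j := by
  rw [label, label, Encodable.encode_inj, Prod.mk.injEq]

/-- The record of a state and the instruction executed next: the tokens of the registers
below `K`. -/
def record (K : ℕ) (p : State × Instr) : List (ℕ × ℕ) :=
  (List.range K).map fun l => (p.1 l, label p.2 l)

/-- The tokens of a computation. -/
def trace (K : ℕ) (L : List (State × Instr)) : List (ℕ × ℕ) :=
  L.flatMap (record K)

theorem getElem?_flatMap_of_length_eq {α β : Type*} {f : α → List β} {K : ℕ}
    (hf : ∀ x, (f x).length = K) (L : List α) (r : ℕ) {l : ℕ} (hl : l < K) :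
    (L.flatMap f)[r * K + l]? = L[r]?.bind fun x => (f x)[l]? := by
  induction L generalizing r with
  | nil => simp
  | cons x L ih =>
    rw [List.flatMap_cons]
    cases r with
    | zero => rw [List.getElem?_append_left (by simpa [hf])]; simp
    | succ r =>
      rw [List.getElem?_append_right (by rw [hf]; grind), hf, List.getElem?_cons_succ, ← ih]
      congr 1
      grind

theorem getElem?_trace {K : ℕ} (L : List (State × Instr)) (r : ℕ) {l : ℕ} (hl : l < K) :
    (trace K L)[r * K + l]? = L[r]?.map fun p => (p.1 l, label p.2 l) := by
  rw [trace, getElem?_flatMap_of_length_eq (by simp [record]) L r hl]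
  simp [record, hl, Option.map_eq_bind]

theorem mismatch_trace_iff {K i j : ℕ} (hi : i < K) (hj : j < K) {c : Instr} {inc : Bool}
    {L : List (State × Instr)} :
    Mismatch (label c i) (K - 1 - i + j) inc (trace K L) ↔
      ∃ r s s' c', L[r]? = some (s, c) ∧ L[r + 1]? = some (s', c') ∧ s' j ≠ s i + inc.toNat := by
  have next (r : ℕ) : r * K + i + (K - 1 - i + j) + 1 = (r + 1) * K + j := by grind
  constructor
  · rintro ⟨p, x, y, d', h₁, h₂, hne⟩
    obtain ⟨r, l, hl, rfl⟩ : ∃ r l, l < K ∧ p = r * K + l :=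
      ⟨p / K, p % K, Nat.mod_lt _ (by lia), (Nat.div_add_mod' p K).symm⟩
    rw [getElem?_trace L r hl, Option.map_eq_some_iff] at h₁
    obtain ⟨⟨s, c⟩, hs, h⟩ := h₁
    obtain ⟨rfl, hlabel⟩ := Prod.mk.inj h
    obtain ⟨rfl, rfl⟩ := label_inj.1 hlabel
    rw [next, getElem?_trace L _ hj, Option.map_eq_some_iff] at h₂
    obtain ⟨⟨s', c'⟩, hs', h⟩ := h₂
    obtain ⟨rfl, -⟩ := Prod.mk.inj h
    exact ⟨r, s, s', c', hs, hs', hne⟩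
  · rintro ⟨r, s, s', c', hs, hs', hne⟩
    refine ⟨r * K + i, s i, s' j, label c' j, ?_, ?_, hne⟩
    · rw [getElem?_trace L r hi, hs]
      rfl
    · rw [next, getElem?_trace L _ hj, hs']
      rfl

theorem exists_mismatch_iff_not_isChain {K : ℕ} {A : List Instr}
    (hA : ∀ c ∈ A, c.src < K ∧ c.dst < K) {L : List (State × Instr)} (hL : ∀ p ∈ L, p.2 ∈ A) :
    (∃ c ∈ A, ∃ q ∈ StepBelow.checks K c,
      Mismatch (label c q.1) (K - 1 - q.1 + q.2.1) q.2.2 (trace K L)) ↔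
      ¬ L.IsChain fun p q => StepBelow K p.2 p.1 q.1 := by
  simp only [List.isChain_iff_getElem, StepBelow.iff_checks, not_forall]
  constructor
  · rintro ⟨c, hc, q, hq, h⟩
    obtain ⟨hi, hj⟩ := StepBelow.lt_of_mem_checks (hA c hc) hq
    obtain ⟨r, s, s', c', hs, hs', hne⟩ := (mismatch_trace_iff hi hj).1 h
    obtain ⟨hr, hs'⟩ := List.getElem?_eq_some_iff.1 hs'
    obtain ⟨_, hs⟩ := List.getElem?_eq_some_iff.1 hs
    exact ⟨r, hr, q, by rwa [hs], by rwa [hs, hs']⟩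
  · rintro ⟨r, hr, q, hq, hne⟩
    have hc : L[r].2 ∈ A := hL _ (List.getElem_mem _)
    obtain ⟨hi, hj⟩ := StepBelow.lt_of_mem_checks (hA _ hc) hq
    exact ⟨_, hc, q, hq, (mismatch_trace_iff hi hj).2 ⟨r, _, _, _,
      List.getElem?_eq_getElem _, List.getElem?_eq_getElem hr, hne⟩⟩

end Trace

/-! ### Regular expressions for traces -/

section TraceRE

variable {σ : Type*} (a b : σ) (K : ℕ)

theorem map_snd_eq_iff_exists_record {K : ℕ} {c : Instr} {T : List (ℕ × ℕ)} :
    T.map Prod.snd = (List.range K).map (label c) ↔ ∃ s : State, T = record K (s, c) := by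
  constructor
  · intro h
    have hlen : T.length = K := by simpa using congrArg List.length h
    refine ⟨fun l => (T[l]?.getD (0, 0)).1, List.ext_getElem (by simp [record, hlen]) ?_⟩
    intro l hl _
    have hlabel : T[l].2 = label c l := by
      have := List.getElem_of_eq h (i := l) (by simpa using hl)
      simpa only [List.getElem_map, List.getElem_range] using this
    simp [record, hl, ← hlabel]
  · rintro ⟨s, rfl⟩
    simp [record]

/-- The regular expression for the records of the instruction `c`. -/
def recordRE (c : Instr) : RegularExpression σ :=
  tokensRE a b ((List.range K).map (label c))

/-- The regular expression for the words which, prefixed by `a ^ n`, are the record of an initial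
state with input `n`. -/
def initRE : RegularExpression σ :=
  .char a * .char b ^ (label guess 0 + 1) * (.char a * .char b ^ (label guess 1 + 1)) *
    tokensRE a b ((List.range' 2 (K - 2)).map (label guess))

/-- The regular expression for the words which, prefixed by `a ^ n`, are the trace of an alleged
run of `e` on the input `n`. -/
def traceRE (e : RegularExpression Instr) : RegularExpression σ :=
  initRE a b K * substRE (recordRE a b K) (e * .char guess)

/-- The regular expression for the middle factors witnessing that an instruction from `A` was not
executed correctly. -/
def faultRE (A : List Instr) : RegularExpression σ :=
  (A.flatMap fun c => (StepBelow.checks K c).map fun q =>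
    mismatchRE a b (label c q.1) (K - 1 - q.1 + q.2.1) q.2.2).sum

variable {a b K}

theorem mem_recordRE {c : Instr} {w : List σ} : w ∈ (recordRE a b K c).matches' ↔
    ∃ p : State × Instr, p.2 = c ∧ w = tokenWord a b (record K p) := by
  simp only [recordRE, mem_tokensRE, map_snd_eq_iff_exists_record, Prod.exists, ↓existsAndEq,
    true_and]

theorem exists_mem_initRE_iff (hK : 2 ≤ K) {n : ℕ} {w : List σ} :
    (∃ v ∈ (initRE a b K).matches', List.replicate n a ++ v = w) ↔
      ∃ s : State, s 0 = n ∧ s 1 = 0 ∧ w = tokenWord a b (record K (s, guess)) := by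
  obtain ⟨k, rfl⟩ := Nat.exists_eq_add_of_le' hK
  have hrange : List.range (k + 2) = 0 :: 1 :: List.range' 2 k := by
    rw [List.range_eq_range', List.range'_succ, List.range'_succ]
  have hword (n : ℕ) (T : List (ℕ × ℕ)) :
      tokenWord a b ((n, label guess 0) :: (0, label guess 1) :: T) =
        List.replicate n a ++ ([a] ++ List.replicate (label guess 0 + 1) b ++
          ([a] ++ List.replicate (label guess 1 + 1) b) ++ tokenWord a b T) := by
    simp [tokenWord_cons, List.replicate_succ']
  simp only [initRE, Nat.add_sub_cancel, mem_mul, mem_char_pow, mem_tokensRE,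
    RegularExpression.matches'_char]
  constructor
  · rintro ⟨_, ⟨_, ⟨_, ⟨_, rfl, _, rfl, rfl⟩, _, ⟨_, rfl, _, rfl, rfl⟩, rfl⟩, _,
      ⟨T, hT, rfl⟩, rfl⟩, rfl⟩
    obtain ⟨s, hs⟩ := (map_snd_eq_iff_exists_record (c := guess) (K := k + 2)
      (T := (n, label guess 0) :: (0, label guess 1) :: T)).1 (by simp [hrange, hT])
    have hs' := hs
    simp only [record, hrange, List.map_cons, List.cons.injEq, Prod.mk.injEq, and_true] at hs'
    exact ⟨s, hs'.1.symm, hs'.2.1.symm, by rw [← hs, hword]⟩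
  · rintro ⟨s, rfl, hs, rfl⟩
    refine ⟨_, ⟨_, ⟨_, ⟨_, rfl, _, rfl, rfl⟩, _, ⟨_, rfl, _, rfl, rfl⟩, rfl⟩, _,
      ⟨(List.range' 2 k).map fun l => (s l, label guess l), by simp, rfl⟩, rfl⟩, ?_⟩
    rw [← hword, record, hrange, List.map_cons, List.map_cons, ← hs]

theorem exists_mem_traceRE_iff (hK : 2 ≤ K) {e : RegularExpression Instr} {n : ℕ} {w : List σ} :
    (∃ v ∈ (traceRE a b K e).matches', List.replicate n a ++ v = w) ↔
      ∃ (s : State) (L : List (State × Instr)), s 0 = n ∧ s 1 = 0 ∧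
        L.map Prod.snd ∈ (e * .char guess).matches' ∧
        w = tokenWord a b (trace K ((s, guess) :: L)) := by
  have hsubst := Represents.subst (fun c w => mem_recordRE (a := a) (b := b) (K := K) (c := c)
    (w := w)) (e * .char guess)
  have htrace (s : State) (L : List (State × Instr)) :
      tokenWord a b (trace K ((s, guess) :: L)) =
        tokenWord a b (record K (s, guess)) ++ L.flatMap fun p => tokenWord a b (record K p) := by
    rw [trace, List.flatMap_cons, tokenWord_append, tokenWord, tokenWord, List.flatMap_assoc]
    rfl
  simp only [traceRE, mem_mul, hsubst _, htrace]
  constructor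
  · rintro ⟨_, ⟨v, hv, _, ⟨L, hL, rfl⟩, rfl⟩, rfl⟩
    obtain ⟨s, h0, h1, hs⟩ := (exists_mem_initRE_iff hK).1 ⟨v, hv, rfl⟩
    exact ⟨s, L, h0, h1, hL, by rw [← hs, List.append_assoc]⟩
  · rintro ⟨s, L, h0, h1, hL, rfl⟩
    obtain ⟨v, hv, hs⟩ := (exists_mem_initRE_iff hK).2 ⟨s, h0, h1, rfl⟩
    exact ⟨_, ⟨v, hv, _, ⟨L, hL, rfl⟩, rfl⟩, by rw [← hs, List.append_assoc]⟩

theorem mem_faultRE {A : List Instr} {w : List σ} :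
    w ∈ (faultRE a b K A).matches' ↔ ∃ c ∈ A, ∃ q ∈ StepBelow.checks K c,
      w ∈ (mismatchRE a b (label c q.1) (K - 1 - q.1 + q.2.1) q.2.2).matches' := by
  simp only [faultRE, mem_sum, List.mem_flatMap, List.mem_map]
  constructor
  · rintro ⟨_, ⟨c, hc, q, hq, rfl⟩, hw⟩
    exact ⟨c, hc, q, hq, hw⟩
  · rintro ⟨c, hc, q, hq, hw⟩
    exact ⟨_, ⟨c, hc, q, hq, rfl⟩, hw⟩

theorem halts_iff_exists_isChain {e : RegularExpression Instr}
    (hK : ∀ l ∈ e.matches', ∀ c ∈ guess :: l, c.src < K ∧ c.dst < K) {n : ℕ} :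
    Halts e n ↔ ∃ (s : State) (L : List (State × Instr)), s 0 = n ∧ s 1 = 0 ∧
      L.map Prod.snd ∈ (e * .char guess).matches' ∧
      List.IsChain (fun p q => StepBelow K p.2 p.1 q.1) ((s, guess) :: L) := by
  constructor
  · rintro ⟨s, s', h0, h1, _, ⟨_, rfl, l, hl, rfl⟩, h⟩
    obtain ⟨L, hL, hchain⟩ := (exists_exec_iff_exists_isChain (hK l hl) guess).1 ⟨s', h⟩
    exact ⟨s, L, h0, h1, mem_mul.2 ⟨l, hl, _, rfl, hL.symm⟩, hchain⟩
  · rintro ⟨s, L, h0, h1, ⟨l, hl, _, rfl, hL⟩, hchain⟩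
    obtain ⟨s', h⟩ := (exists_exec_iff_exists_isChain (hK l hl) guess).2 ⟨L, hL.symm, hchain⟩
    exact ⟨s, s', h0, h1, _, ⟨_, rfl, l, hl, rfl⟩, h⟩

end TraceRE

/-! ### Patterns -/

section Patterns

variable {σ : Type}

theorem mem_langE_map_inr {l : TFPattern} {r : ℕ → Set (List σ)} {w : List σ} :
    w ∈ LangE (l.map Sum.inr) r ↔ ∃ s : ℕ → List σ, (∀ x ∈ l, s x ∈ r x) ∧ l.flatMap s = w := by
  have happly (s : ℕ → List σ) : applySub s (l.map Sum.inr) = l.flatMap s := by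
    induction l with
    | nil => rfl
    | cons x l ih => rw [List.map_cons, applySub, ih, List.flatMap_cons, Sum.elim_inr]
  simp [LangE, Valid, varsOf, happly]

/-- The left pattern of the reduction on the input `n`. Its variable `0` will be constrained to the
single letter `a`, so that the input enters without terminals. -/
def sourcePattern (n : ℕ) : TFPattern := List.replicate n 0 ++ [1]

/-- The constraint that makes the words of `sourcePattern n` the traces of the alleged runs of `e`
on the input `n`. -/
def sourceConstraint (a b : σ) (K : ℕ) (e : RegularExpression Instr) : RegConstraint σ :=
  [(0, .char a), (1, traceRE a b K e)]

/-- The right pattern `u z v z x` of the reduction. The repeated variable `z` compares two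
blocks. -/
def targetPattern : TFPattern := [0, 1, 2, 1, 3]

/-- The constraint that makes `targetPattern` match exactly the faulty traces, where `A` contains
all instructions that occur. -/
def targetConstraint (a b : σ) (K : ℕ) (A : List Instr) : RegConstraint σ :=
  [(0, .star (tokenRE a b)), (1, atLeast a 1), (2, faultRE a b K A),
    (3, atLeast b 1 * .star (tokenRE a b))]

variable {a b : σ} {K : ℕ}

theorem mem_langE_sourcePattern {e : RegularExpression Instr} {n : ℕ} {w : List σ} :
    w ∈ LangE ((sourcePattern n).map Sum.inr) (constraintOf (sourceConstraint a b K e)) ↔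
      ∃ v ∈ (traceRE a b K e).matches', List.replicate n a ++ v = w := by
  have hflatMap (s : ℕ → List σ) :
      (sourcePattern n).flatMap s = (List.replicate n (s 0)).flatten ++ s 1 := by
    simp [sourcePattern, List.flatMap_def]
  simp only [mem_langE_map_inr, hflatMap]
  constructor
  · rintro ⟨s, hs, rfl⟩
    refine ⟨s 1, hs 1 (by simp [sourcePattern]), ?_⟩
    cases n with
    | zero => rfl
    | succ n =>
      have hs₀ : s 0 = [a] := hs 0 (by simp [sourcePattern])
      rw [hs₀, List.flatten_replicate_singleton]
  · rintro ⟨v, hv, rfl⟩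
    refine ⟨fun | 0 => [a] | _ => v, fun x hx => ?_, ?_⟩
    · obtain ⟨-, rfl⟩ | rfl : _ ∨ x = 1 := by simpa [sourcePattern] using hx
      exacts [rfl, hv]
    · exact congrArg (· ++ v) List.flatten_replicate_singleton

theorem mem_langE_targetPattern {A : List Instr} {w : List σ} :
    w ∈ LangE (targetPattern.map Sum.inr) (constraintOf (targetConstraint a b K A)) ↔
      ∃ u ∈ (RegularExpression.star (tokenRE a b)).matches', ∃ z ∈ (atLeast a 1).matches',
        ∃ v ∈ (faultRE a b K A).matches', ∃ x ∈ (atLeast b 1 * .star (tokenRE a b)).matches',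
          u ++ (z ++ (v ++ (z ++ x))) = w := by
  rw [mem_langE_map_inr]
  simp only [targetPattern, List.forall_mem_cons]
  constructor
  · rintro ⟨s, ⟨h0, h1, h2, -, h3, -⟩, rfl⟩
    exact ⟨s 0, h0, s 1, h1, s 2, h2, s 3, h3, by simp⟩
  · rintro ⟨u, hu, z, hz, v, hv, x, hx, rfl⟩
    refine ⟨fun | 0 => u | 1 => z | 2 => v | _ => x, ⟨hu, hz, hv, hz, hx, by simp⟩, by simp⟩

theorem tokenWord_mem_langE_targetPattern (hab : a ≠ b) {A : List Instr} {T : List (ℕ × ℕ)} :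
    tokenWord a b T ∈
        LangE (targetPattern.map Sum.inr) (constraintOf (targetConstraint a b K A)) ↔
      ∃ c ∈ A, ∃ q ∈ StepBelow.checks K c,
        Mismatch (label c q.1) (K - 1 - q.1 + q.2.1) q.2.2 T := by
  simp only [mem_langE_targetPattern, mem_faultRE, ← exists_factorization_iff_mismatch hab]
  constructor
  · rintro ⟨u, hu, z, hz, v, ⟨c, hc, q, hq, hv⟩, x, hx, h⟩
    exact ⟨c, hc, q, hq, u, hu, z, hz, v, hv, x, hx, h⟩
  · rintro ⟨c, hc, q, hq, u, hu, z, hz, v, hv, x, hx, h⟩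
    exact ⟨u, hu, z, hz, v, ⟨c, hc, q, hq, hv⟩, x, hx, h⟩

theorem langE_subset_langE_iff_not_halts (hab : a ≠ b) (hK : 2 ≤ K) {A : List Instr}
    {e : RegularExpression Instr} (hA : ∀ l ∈ (e * .char guess).matches', ∀ c ∈ l, c ∈ A)
    (hguess : guess ∈ A)
    (hAK : ∀ c ∈ A, c.src < K ∧ c.dst < K) (n : ℕ) :
    LangE ((sourcePattern n).map Sum.inr) (constraintOf (sourceConstraint a b K e)) ⊆
      LangE (targetPattern.map Sum.inr) (constraintOf (targetConstraint a b K A)) ↔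
    ¬ Halts e n := by
  have he : ∀ l ∈ e.matches', ∀ c ∈ guess :: l, c.src < K ∧ c.dst < K := by
    intro l hl c hc
    refine hAK c ((List.mem_cons.1 hc).elim (· ▸ hguess) fun hc => ?_)
    exact hA _ (mem_mul.2 ⟨l, hl, _, rfl, rfl⟩) c (List.mem_append_left _ hc)
  have hL {s : State} {L : List (State × Instr)}
      (h : L.map Prod.snd ∈ (e * .char guess).matches') : ∀ p ∈ (s, guess) :: L, p.2 ∈ A :=
    List.forall_mem_cons.2 ⟨hguess, fun p hp => hA _ h _ (List.mem_map_of_mem hp)⟩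
  rw [halts_iff_exists_isChain he]
  constructor
  · rintro h ⟨s, L, h0, h1, hmem, hchain⟩
    refine (exists_mismatch_iff_not_isChain hAK (hL hmem)).1 ?_ hchain
    rw [← tokenWord_mem_langE_targetPattern hab]
    exact h (mem_langE_sourcePattern.2 ((exists_mem_traceRE_iff hK).2 ⟨s, L, h0, h1, hmem, rfl⟩))
  · intro h w hw
    obtain ⟨s, L, h0, h1, hmem, rfl⟩ :=
      (exists_mem_traceRE_iff hK).1 (mem_langE_sourcePattern.1 hw)
    rw [tokenWord_mem_langE_targetPattern hab, exists_mismatch_iff_not_isChain hAK (hL hmem)]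
    exact fun hchain => h ⟨s, L, h0, h1, hmem, hchain⟩

theorem exists_not_computablePred_langE_subset_langE (σ : Type) [Nontrivial σ] :
    ∃ r r' : RegConstraint σ, ¬ ComputablePred fun n =>
      LangE ((sourcePattern n).map Sum.inr) (constraintOf r) ⊆
        LangE (targetPattern.map Sum.inr) (constraintOf r') := by
  obtain ⟨a, b, hab⟩ := exists_pair_ne σ
  obtain ⟨e, he⟩ := exists_not_computablePred_halts
  obtain ⟨A, hA⟩ := exists_alphabet (e * .char guess)
  obtain ⟨K, hK, hAK⟩ : ∃ K, 2 ≤ K ∧ ∀ c ∈ guess :: A, c.src < K ∧ c.dst < K := by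
    refine ⟨((guess :: A).map fun c => c.src + c.dst).sum + 2, by lia, fun c hc => ?_⟩
    have := List.le_sum_of_mem (List.mem_map_of_mem (f := fun c : Instr => c.src + c.dst) hc)
    lia
  refine ⟨sourceConstraint a b K e, targetConstraint a b K (guess :: A), fun h => he ?_⟩
  simpa only [langE_subset_langE_iff_not_halts hab hK
    (fun l hl c hc => List.mem_cons_of_mem _ (hA l hl c hc)) List.mem_cons_self hAK, not_not]
    using h.not

end Patterns

/-! ### Encodings -/

section Encoding

variable {σ : Type} [Encodable σ]

theorem computable_encode_pair_pair {α β γ : Type} [Encodable α] [Encodable β] [Encodable γ]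
    {f : ℕ → α} (hf : Computable fun n => Encodable.encode (f n)) (y : β) (z : γ) :
    Computable fun n => Encodable.encode ((f n, y), z) := by
  simp only [Encodable.encode_prod_val]
  exact Primrec₂.natPair.to_comp.comp (Primrec₂.natPair.to_comp.comp hf (Computable.const _))
    (Computable.const _)

theorem encode_map_inr (l : TFPattern) :
    Encodable.encode (l.map Sum.inr : Pattern σ) = Encodable.encode (l.map (2 * · + 1)) := by
  induction l with
  | nil => rfl
  | cons x l ih =>
    simp only [List.map_cons, Encodable.encode_list_cons, ih]
    rfl

theorem primrec_sourcePattern : Primrec sourcePattern :=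
  (Primrec.list_append.comp (Primrec.list_map Primrec.list_range (Primrec.const 0).to₂)
    (Primrec.const [1])).of_eq fun n => by simp [sourcePattern]

theorem computable_encodeTFInput_sourcePattern (r : RegConstraint σ)
    (q : TFPattern × RegConstraint σ) :
    Computable fun n => encodeTFInput ((sourcePattern n, r), q) := by
  simp only [encodeTFInput]
  exact computable_encode_pair_pair (Primrec.encode.comp primrec_sourcePattern).to_comp _ _

theorem computable_encodeInput_sourcePattern (r : RegConstraint σ)
    (q : Pattern σ × RegConstraint σ) :
    Computable fun n => encodeInput (((sourcePattern n).map Sum.inr, r), q) := by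
  have hcode : Primrec₂ fun (_ x : ℕ) => 2 * x + 1 :=
    (Primrec.succ.comp (Primrec.nat_mul.comp (Primrec.const 2) Primrec.snd)).to₂
  simp only [encodeInput]
  refine computable_encode_pair_pair ?_ _ _
  simp only [encode_map_inr]
  exact (Primrec.encode.comp (Primrec.list_map primrec_sourcePattern hcode)).to_comp

end Encoding

end EPattern

theorem inclusion_EPatternRegConstraints_undecidable_general (σ : Type) [Encodable σ]
    [Nontrivial σ] :
    (¬ ∃ f : ℕ → Bool, Computable f ∧
      ∀ inp : (Pattern σ × RegConstraint σ) × (Pattern σ × RegConstraint σ),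
        (f (encodeInput inp) = true ↔
          LangE inp.1.1 (constraintOf inp.1.2) ⊆ LangE inp.2.1 (constraintOf inp.2.2))) ∧
    (¬ ∃ f : ℕ → Bool, Computable f ∧
      ∀ inp : (TFPattern × RegConstraint σ) × (TFPattern × RegConstraint σ),
        (f (encodeTFInput inp) = true ↔
          LangE (inp.1.1.map Sum.inr) (constraintOf inp.1.2) ⊆
            LangE (inp.2.1.map Sum.inr) (constraintOf inp.2.2))) := by
  obtain ⟨r, r', h⟩ := EPattern.exists_not_computablePred_langE_subset_langE σ
  constructor
  · rintro ⟨f, hf, hdec⟩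
    refine h (ComputablePred.computable_iff.2 ⟨_, hf.comp
      (EPattern.computable_encodeInput_sourcePattern r (EPattern.targetPattern.map Sum.inr, r')),
      ?_⟩)
    exact funext fun n => propext (hdec ((_, r), (_, r'))).symm
  · rintro ⟨f, hf, hdec⟩
    refine h (ComputablePred.computable_iff.2 ⟨_, hf.comp
      (EPattern.computable_encodeTFInput_sourcePattern r (EPattern.targetPattern, r')), ?_⟩)
    exact funext fun n => propext (hdec ((_, r), (_, r'))).symm

/-- The inclusion problem for erasing pattern languages with regular constraints is
undecidable for every finite alphabet of size at least 2, also when restricted to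
terminal-free patterns. -/
theorem inclusion_EPatternRegConstraints_undecidable
    (σ : Type) [Fintype σ] [Encodable σ] (hcard : 2 ≤ Fintype.card σ) :
    (¬ ∃ f : ℕ → Bool, Computable f ∧
      ∀ inp : (Pattern σ × RegConstraint σ) × (Pattern σ × RegConstraint σ),
        (f (encodeInput inp) = true ↔
          LangE inp.1.1 (constraintOf inp.1.2) ⊆ LangE inp.2.1 (constraintOf inp.2.2))) ∧
    (¬ ∃ f : ℕ → Bool, Computable f ∧
      ∀ inp : (TFPattern × RegConstraint σ) × (TFPattern × RegConstraint σ),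
        (f (encodeTFInput inp) = true ↔
          LangE (inp.1.1.map Sum.inr) (constraintOf inp.1.2) ⊆
            LangE (inp.2.1.map Sum.inr) (constraintOf inp.2.2))) := by
  have := Fintype.one_lt_card_iff_nontrivial.1 hcard
  exact inclusion_EPatternRegConstraints_undecidable_general σ
end

section
/- The inclusion problem for non-erasing pattern languages with regular constraints is undecidable: for every finite alphabet Σ with |Σ| ≥ 2 there is no algorithm that, given two patterns with regular constraints (α, r_α) and (β, r_β) over Σ, decides whether L_NE(α, r_α) ⊆ L_NE(β, r_β). Formally, the predicate 'L_NE(α, r_α) ⊆ L_NE(β, r_β)' on encoded input pairs is not a computable predicate; moreover this remains true when α and β are required to be terminal-free. -/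
/-- The non-erasing constrained pattern language `L_NE(p, r)`. -/
def LangNE {σ : Type} (p : Pattern σ) (r : ℕ → Set (List σ)) : Set (List σ) :=
  {w | ∃ s, Valid r p s ∧ (∀ x ∈ varsOf p, s x ≠ []) ∧ applySub s p = w}

/-!
A stack machine simulates a partial recursive function whose domain is undecidable. Call a word
over the letters of encoded configurations erroneous if it contains the encoding of a configuration
such that the encoding of its successor and the word after it differ in some letter. A word that
begins with the encoding of `c`, ends with the halting state and is not erroneous must spell out the
run from `c`, so the machine fails to halt from `c` if and only if all words of this form are
erroneous.

A step changes only the top of one stack, so `c` and its successor are values of two patterns with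
common variables for the rest of the stacks. A position at which a word differs from a value of the
second pattern lies inside a single variable, whose value can be cut there by regular constraints.
So the erroneous words form a finite union of pattern languages with regular constraints. Such a
union reduces to one pattern by surrounding the word with dummy blocks that absorb all but one of
the patterns of the union, and a letter code reduces the alphabet to two letters.

With inputs `2 ^ n`, whose binary expansion is `n` zeros followed by a one, the words that begin
with the encoding of the initial configuration form a language `A U ^ n B`, the language of a single
variable.
-/

namespace PatternInclusion

open scoped Computability

/-! ### Rational languages -/

section Rational

variable {Γ Δ : Type*} {L M : Language Γ}

/-- Rational languages: those denoted by a regular expression. -/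
def IsRational (L : Language Γ) : Prop := ∃ e : RegularExpression Γ, e.matches' = L

theorem isRational_zero : IsRational (0 : Language Γ) := ⟨0, rfl⟩

theorem isRational_one : IsRational (1 : Language Γ) := ⟨1, rfl⟩

theorem IsRational.add : IsRational L → IsRational M → IsRational (L + M) := by
  rintro ⟨e, rfl⟩ ⟨f, rfl⟩
  exact ⟨e + f, rfl⟩

theorem IsRational.mul : IsRational L → IsRational M → IsRational (L * M) := by
  rintro ⟨e, rfl⟩ ⟨f, rfl⟩
  exact ⟨e * f, rfl⟩

theorem IsRational.kstar : IsRational L → IsRational L∗ := by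
  rintro ⟨e, rfl⟩
  exact ⟨e.star, rfl⟩

theorem singleton_mul_singleton (u v : List Γ) : ({u} : Language Γ) * {v} = {u ++ v} :=
  Set.image2_singleton

theorem singleton_pow (a : Γ) (n : ℕ) :
    ({[a]} : Language Γ) ^ n = {List.replicate n a} := by
  induction n with
  | zero => rfl
  | succ n ih => rw [pow_succ, ih, singleton_mul_singleton, List.replicate_succ']

theorem isRational_singleton (w : List Γ) : IsRational ({w} : Language Γ) := by
  induction w with
  | nil => exact isRational_one
  | cons a w ih =>
    exact singleton_mul_singleton [a] w ▸ IsRational.mul ⟨.char a, rfl⟩ ih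

theorem isRational_of_finite (hL : Set.Finite L) : IsRational L := by
  induction L, hL using Set.Finite.induction_on with
  | empty => exact isRational_zero
  | @insert w L _ _ ih => exact (isRational_singleton w).add ih

/-- The words all of whose letters belong to `S`. -/
def wordsOver (S : Set Γ) : Language Γ := {w : List Γ | ∀ c ∈ w, c ∈ S}

theorem mem_wordsOver {S : Set Γ} {w : List Γ} : w ∈ wordsOver S ↔ ∀ c ∈ w, c ∈ S := Iff.rfl

theorem forall_append_mem_iff (u v : List Γ) :
    (∀ z, u ++ (z ++ v) ∈ L) ↔ {u} * wordsOver Set.univ * {v} ≤ L := by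
  constructor
  · rintro h _ ⟨_, ⟨_, rfl, z, _, rfl⟩, _, rfl, rfl⟩
    exact (congrArg (· ∈ L) (List.append_assoc _ z _)).mpr (h z)
  · exact fun h z => h ⟨u ++ z, ⟨u, rfl, z, fun _ _ => trivial, rfl⟩, v, rfl, by simp⟩

theorem wordsOver_eq_kstar (S : Set Γ) :
    wordsOver S = (show Language Γ from (fun c => [c]) '' S)∗ := by
  ext w
  rw [Language.mem_kstar]
  constructor
  · intro hw
    refine ⟨w.map fun c => [c], (List.flatMap_singleton' w).symm, fun y hy => ?_⟩
    obtain ⟨c, hc, rfl⟩ := List.mem_map.1 hy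
    exact ⟨c, hw c hc, rfl⟩
  · rintro ⟨K, rfl, hK⟩ c hc
    obtain ⟨y, hy, hcy⟩ := List.mem_flatten.1 hc
    obtain ⟨d, hd, rfl⟩ := hK y hy
    exact List.mem_singleton.1 hcy ▸ hd

theorem isRational_wordsOver {S : Set Γ} (hS : S.Finite) : IsRational (wordsOver S) :=
  wordsOver_eq_kstar S ▸ (isRational_of_finite (hS.image _)).kstar

/-- The image of a language under the morphism of free monoids that sends each letter `c` to the
word `h c`. -/
def morphImage (h : Γ → List Δ) (L : Language Γ) : Language Δ := (fun w => w.flatMap h) '' L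

theorem mem_morphImage {h : Γ → List Δ} {v : List Δ} :
    v ∈ morphImage h L ↔ ∃ w ∈ L, w.flatMap h = v := Iff.rfl

theorem morphImage_singleton (h : Γ → List Δ) (w : List Γ) :
    morphImage h {w} = {w.flatMap h} :=
  Set.image_singleton

theorem singleton_mul_morphImage_mul_singleton_le_iff {h : Γ → List Δ} {x y : List Δ}
    {K : Language Δ} (hK : ∀ w, x ++ w.flatMap h ++ y ∈ K ↔ w ∈ L) :
    {x} * morphImage h M * {y} ≤ K ↔ M ≤ L := by
  constructor
  · exact fun hM w hw =>
      (hK w).1 (hM ⟨x ++ w.flatMap h, ⟨x, rfl, _, ⟨w, hw, rfl⟩, rfl⟩, y, rfl, rfl⟩)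
  · rintro hM _ ⟨_, ⟨_, rfl, _, ⟨w, hw, rfl⟩, rfl⟩, _, rfl, rfl⟩
    exact (hK w).2 (hM hw)

theorem morphImage_add (h : Γ → List Δ) (L M : Language Γ) :
    morphImage h (L + M) = morphImage h L + morphImage h M :=
  Set.image_union _ L M

theorem morphImage_mul (h : Γ → List Δ) (L M : Language Γ) :
    morphImage h (L * M) = morphImage h L * morphImage h M :=
  Set.image_image2_distrib fun _ _ => List.flatMap_append

theorem morphImage_pow (h : Γ → List Δ) (L : Language Γ) (n : ℕ) :
    morphImage h (L ^ n) = morphImage h L ^ n := by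
  induction n with
  | zero => exact Set.image_singleton
  | succ n ih => rw [pow_succ, morphImage_mul, ih, pow_succ]

theorem morphImage_kstar (h : Γ → List Δ) (L : Language Γ) :
    morphImage h L∗ = (morphImage h L)∗ := by
  simp only [Language.kstar_eq_iSup_pow, ← morphImage_pow]
  exact Set.image_iUnion

theorem IsRational.morphImage (h : Γ → List Δ) (hL : IsRational L) :
    IsRational (morphImage h L) := by
  obtain ⟨e, rfl⟩ := hL
  induction e with
  | zero => exact ⟨0, Set.image_empty _ |>.symm⟩
  | epsilon => exact (morphImage_pow h 0 0) ▸ isRational_one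
  | char a =>
    have h_char : PatternInclusion.morphImage h {[a]} = {h a} :=
      Set.image_singleton.trans (by simp; rfl)
    exact h_char ▸ isRational_singleton (h a)
  | plus e f ihe ihf => exact (morphImage_add h e.matches' f.matches').symm ▸ ihe.add ihf
  | comp e f ihe ihf => exact (morphImage_mul h e.matches' f.matches').symm ▸ ihe.mul ihf
  | star e ih => exact (morphImage_kstar h e.matches').symm ▸ ih.kstar

end Rational

/-! ### Pattern languages and their finite unions -/

section Lang

variable {Γ Δ X Y : Type*}

/-- The non-erasing language of a terminal-free pattern `p` whose variables `x` are constrained to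
`r x`. -/
def Lang (p : List X) (r : X → Language Γ) : Language Γ :=
  {w : List Γ | ∃ s : X → List Γ, (∀ x ∈ p, s x ∈ r x ∧ s x ≠ []) ∧ p.flatMap s = w}

/-- The erasing language of a terminal-free pattern `p` whose variables `x` are constrained to
`r x`. -/
def LangE (p : List X) (r : X → Language Γ) : Language Γ :=
  {w : List Γ | ∃ s : X → List Γ, (∀ x ∈ p, s x ∈ r x) ∧ p.flatMap s = w}

theorem lang_map {f : X → Y} (hf : Function.Injective f) (p : List X) (r : Y → Language Γ) :
    Lang (p.map f) r = Lang p (r ∘ f) := by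
  ext w
  constructor
  · rintro ⟨s, hs, rfl⟩
    exact ⟨s ∘ f, fun x hx => hs (f x) (List.mem_map_of_mem hx), (List.flatMap_map f s p).symm⟩
  · rintro ⟨s, hs, rfl⟩
    refine ⟨Function.extend f s fun _ => [], List.forall_mem_map.2 fun x hx => ?_, ?_⟩
    · rw [hf.extend_apply]
      exact hs x hx
    · simp only [List.flatMap_map, hf.extend_apply]

theorem lang_singleton {x : X} {r : X → Language Γ} (hx : [] ∉ r x) : Lang [x] r = r x := by
  ext w
  constructor
  · rintro ⟨s, hs, rfl⟩
    simpa using (hs x (by simp)).1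
  · exact fun hw => ⟨fun _ => w, by simpa [hw] using ne_of_mem_of_not_mem hw hx, by simp⟩

theorem exists_nat_lang_eq [Countable X] (p : List X) {r : X → Language Γ}
    (hr : ∀ x, IsRational (r x)) :
    ∃ (p' : List ℕ) (r' : ℕ → Language Γ), (∀ x, IsRational (r' x)) ∧ Lang p' r' = Lang p r := by
  obtain ⟨f, hf⟩ := exists_injective_nat X
  refine ⟨p.map f, Function.extend f r fun _ => 0, fun x => ?_, ?_⟩
  · by_cases hx : ∃ a, f a = x
    · obtain ⟨a, rfl⟩ := hx
      exact (hf.extend_apply r _ a).symm ▸ hr a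
    · exact (Function.extend_apply' r _ x hx).symm ▸ isRational_zero
  · rw [lang_map hf, Function.extend_comp hf]

theorem lang_morphImage {h : Γ → List Δ} (h_ne : ∀ a, h a ≠ []) (p : List X)
    (r : X → Language Γ) :
    Lang p (fun x => morphImage h (r x)) = morphImage h (Lang p r) := by
  have h_nil (t : List Γ) : t.flatMap h = [] ↔ t = [] := by
    rw [List.flatMap_eq_nil_iff, List.eq_nil_iff_forall_not_mem]
    exact forall₂_congr fun a _ => iff_false_intro (h_ne a)
  ext v
  constructor
  · rintro ⟨s, hs, rfl⟩
    have h_lift (x) : ∃ t, x ∈ p → t ∈ r x ∧ t.flatMap h = s x := by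
      by_cases hx : x ∈ p
      · obtain ⟨t, ht, hts⟩ := (hs x hx).1
        exact ⟨t, fun _ => ⟨ht, hts⟩⟩
      · exact ⟨[], fun hp => absurd hp hx⟩
    choose t ht using h_lift
    refine ⟨p.flatMap t, ⟨t, fun x hx => ⟨(ht x hx).1, fun h0 => (hs x hx).2 ?_⟩, rfl⟩, ?_⟩
    · rw [← (ht x hx).2, h0, List.flatMap_nil]
    · exact List.flatMap_assoc.trans (List.flatMap_congr fun x hx => (ht x hx).2)
  · rintro ⟨_, ⟨t, ht, rfl⟩, rfl⟩
    exact ⟨fun x => (t x).flatMap h, fun x hx =>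
      ⟨⟨t x, (ht x hx).1, rfl⟩, mt (h_nil _).1 (ht x hx).2⟩, List.flatMap_assoc.symm⟩

/-- Finite unions of non-erasing languages of patterns with rational constraints. -/
def IsNEUnion (L : Language Γ) : Prop :=
  ∃ (n : ℕ) (p : Fin n → List ℕ) (r : Fin n → ℕ → Language Γ),
    (∀ i x, IsRational (r i x)) ∧ L = ⨆ i, Lang (p i) (r i)

theorem isNEUnion_lang [Countable X] (p : List X) {r : X → Language Γ}
    (hr : ∀ x, IsRational (r x)) : IsNEUnion (Lang p r) := by
  obtain ⟨p', r', hr', h⟩ := exists_nat_lang_eq p hr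
  exact ⟨1, fun _ => p', fun _ => r', fun _ => hr', by rw [ciSup_const, h]⟩

theorem IsNEUnion.iSup {κ : Sort*} [Finite κ] {L : κ → Language Γ} (hL : ∀ k, IsNEUnion (L k)) :
    IsNEUnion (⨆ k, L k) := by
  choose n p r hr h using hL
  obtain ⟨m, ⟨e⟩⟩ := Finite.exists_equiv_fin (Σ k : PLift κ, Fin (n k.down))
  refine ⟨m, fun i => p _ (e.symm i).2, fun i => r _ (e.symm i).2, fun i => hr _ _, ?_⟩
  rw [e.symm.iSup_comp (g := fun j => Lang (p j.1.down j.2) (r j.1.down j.2)), iSup_sigma]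
  exact (iSup_congr h).trans (iSup_plift_down fun k => ⨆ i, Lang (p k i) (r k i)).symm

theorem flatMap_filter_notMem [DecidableEq X] {s : X → List Γ} {E : Finset X}
    (h : ∀ x ∈ E, s x = []) (p : List X) : (p.filter (· ∉ E)).flatMap s = p.flatMap s := by
  induction p with
  | nil => rfl
  | cons x p ih => by_cases hx : x ∈ E <;> simpa [hx, h] using ih

theorem langE_eq_iSup [DecidableEq X] (p : List X) (r : X → Language Γ) :
    LangE p r = ⨆ E : p.toFinset.powerset, ⨆ _ : ∀ x ∈ E.1, [] ∈ r x,
      Lang (p.filter (· ∉ E.1)) r := by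
  ext w
  simp only [Language.mem_iSup]
  constructor
  · rintro ⟨s, hs, rfl⟩
    let E := p.toFinset.filter fun x => s x = []
    have hE (x) : x ∈ E ↔ x ∈ p ∧ s x = [] := by simp [E]
    refine ⟨⟨E, Finset.mem_powerset.2 (Finset.filter_subset _ _)⟩,
      fun x hx => ((hE x).1 hx).2 ▸ hs x ((hE x).1 hx).1, s, fun x hx => ?_,
      flatMap_filter_notMem (fun x hx => ((hE x).1 hx).2) p⟩
    obtain ⟨hxp, hxE⟩ := List.mem_filter.1 hx
    exact ⟨hs x hxp, fun h => of_decide_eq_true hxE ((hE x).2 ⟨hxp, h⟩)⟩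
  · rintro ⟨⟨E, _⟩, hE, s, hs, rfl⟩
    let t (x : X) := if x ∈ E then [] else s x
    refine ⟨t, fun x hx => ?_, ?_⟩
    · by_cases hxE : x ∈ E
      · simpa [t, hxE] using hE x hxE
      · simpa [t, hxE] using (hs x (by simp [hx, hxE])).1
    · rw [← flatMap_filter_notMem (E := E) (fun x hx => if_pos hx)]
      exact List.flatMap_congr fun x hx => if_neg (of_decide_eq_true (List.mem_filter.1 hx).2)

theorem isNEUnion_langE [Countable X] (p : List X) {r : X → Language Γ}
    (hr : ∀ x, IsRational (r x)) : IsNEUnion (LangE p r) := by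
  classical
  rw [langE_eq_iSup]
  exact .iSup fun E => .iSup fun _ => isNEUnion_lang _ hr

end Lang

/-! ### Separated concatenation -/

section JoinSep

variable {Γ : Type*} {s : Γ} {K M : List (List Γ)}

/-- The concatenation of the blocks of `K`, each followed by the separator `s`. -/
def joinSep (s : Γ) (K : List (List Γ)) : List Γ := K.flatMap (· ++ [s])

theorem joinSep_cons (s : Γ) (b : List Γ) (K : List (List Γ)) :
    joinSep s (b :: K) = b ++ s :: joinSep s K := by
  simp [joinSep]

theorem joinSep_append (s : Γ) (K M : List (List Γ)) :
    joinSep s (K ++ M) = joinSep s K ++ joinSep s M :=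
  List.flatMap_append

theorem append_cons_inj_of_notMem {b c u v : List Γ} (hb : s ∉ b) (hc : s ∉ c)
    (h : b ++ s :: u = c ++ s :: v) : b = c ∧ u = v := by
  classical
  have h_length : b.length = c.length := by
    simpa [List.idxOf_append_of_notMem, hb, hc] using congrArg (List.idxOf s) h
  obtain ⟨rfl, h_tail⟩ := List.append_inj h h_length
  exact ⟨rfl, List.tail_eq_of_cons_eq h_tail⟩

theorem joinSep_append_inj (hK : ∀ b ∈ K, s ∉ b) (hM : ∀ b ∈ M, s ∉ b)
    (h_length : K.length = M.length) {u v : List Γ} (h : joinSep s K ++ u = joinSep s M ++ v) :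
    K = M ∧ u = v := by
  induction K generalizing M with
  | nil =>
    obtain rfl : M = [] := List.length_eq_zero_iff.1 h_length.symm
    exact ⟨rfl, h⟩
  | cons b K ih =>
    obtain _ | ⟨c, M⟩ := M
    · cases h_length
    simp only [joinSep_cons, List.append_assoc, List.cons_append] at h
    rw [List.forall_mem_cons] at hK hM
    obtain ⟨rfl, h_tail⟩ := append_cons_inj_of_notMem hK.1 hM.1 h
    obtain ⟨rfl, huv⟩ := ih hK.2 hM.2 (Nat.succ.inj h_length) h_tail
    exact ⟨rfl, huv⟩

theorem count_joinSep [DecidableEq Γ] (hK : ∀ b ∈ K, s ∉ b) :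
    (joinSep s K).count s = K.length := by
  induction K with
  | nil => rfl
  | cons b K ih =>
    rw [List.forall_mem_cons] at hK
    simp [joinSep_cons, List.count_eq_zero_of_not_mem hK.1, ih hK.2]

theorem joinSep_inj (hK : ∀ b ∈ K, s ∉ b) (hM : ∀ b ∈ M, s ∉ b)
    (h : joinSep s K = joinSep s M) : K = M := by
  classical
  have h_length : K.length = M.length := by rw [← count_joinSep hK, h, count_joinSep hM]
  exact (joinSep_append_inj hK hM h_length (congrArg (· ++ []) h)).1

theorem mem_kstar_singleton_append {b w : List Γ} :
    w ∈ ({b ++ [s]} : Language Γ)∗ ↔ ∃ n, w = joinSep s (List.replicate n b) := by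
  rw [Language.mem_kstar]
  constructor
  · rintro ⟨K, rfl, hK⟩
    refine ⟨K.length, ?_⟩
    nth_rw 1 [List.eq_replicate_of_mem hK]
    simp [joinSep, List.flatMap]
  · rintro ⟨n, rfl⟩
    exact ⟨List.replicate n (b ++ [s]), by simp [joinSep, List.flatMap], fun y hy =>
      List.eq_of_mem_replicate hy⟩

theorem mem_wordsOver_singleton {w : List Γ} :
    w ∈ wordsOver {s} ↔ ∃ n, w = List.replicate n s :=
  ⟨fun h => ⟨_, List.eq_replicate_of_mem h⟩, by
    rintro ⟨n, rfl⟩ c hc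
    exact List.eq_of_mem_replicate hc⟩

end JoinSep

/-! ### Reducing a finite union to a single pattern -/

/-- The letters of the alphabet `Γ` extended by a separator, a dummy letter and a letter that marks
the word whose membership is tested. -/
inductive GadgetLetter (Γ : Type*)
  | base (g : Γ)
  | sep
  | dummy
  | start
  deriving Countable

/-- The variables of the pattern that simulates a finite union of patterns over `X` indexed by
`ι`. -/
inductive GadgetVar (ι X : Type*)
  | pre
  | suf
  | sep (i : ι)
  | tag (i : ι)
  | var (i : ι) (x : X)
  deriving Countable

section Gadget

open GadgetLetter

variable {Γ X : Type*} {n N : ℕ} {p : Fin n → List X} {r : Fin n → X → Language Γ}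

/-- A copy of `w` in the extended alphabet. -/
def lift (w : List Γ) : List (GadgetLetter Γ) := w.flatMap fun g => [base g]

theorem lift_injective : Function.Injective (lift : List Γ → List (GadgetLetter Γ)) := by
  intro v w h
  simp only [lift, ← List.map_eq_flatMap] at h
  exact List.map_injective_iff.2 (fun _ _ => base.inj) h

theorem mem_lift {w : List Γ} {c : GadgetLetter Γ} : c ∈ lift w ↔ ∃ g ∈ w, base g = c := by
  simp [lift, eq_comm]

/-- The constraints of the simulating pattern. -/
def gadgetConstraint (N : ℕ) (r : Fin n → X → Language Γ) :
    GadgetVar (Fin n) X → Language (GadgetLetter Γ)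
  | .pre | .suf => ({List.replicate N dummy ++ [sep]} : Language _)∗
  | .sep _ => {[sep]}
  | .tag _ => {[start]} + wordsOver {dummy}
  | .var i x => morphImage (fun g => [base g]) (r i x) + wordsOver {dummy}

/-- The part of the simulating pattern that simulates `p i`. -/
def gadgetBlock (p : Fin n → List X) (i : Fin n) : List (GadgetVar (Fin n) X) :=
  .tag i :: (p i).map (.var i)

/-- The simulating pattern. -/
def gadgetPattern (p : Fin n → List X) : List (GadgetVar (Fin n) X) :=
  .pre :: (List.finRange n).flatMap (fun i => gadgetBlock p i ++ [.sep i]) ++ [.suf]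

/-- The word that belongs to the language of the simulating pattern if and only if `w` belongs to
the union: one of the `n` blocks of the pattern has to match the marked block, while `pre`, `suf`
and the other blocks match the dummy blocks around it. -/
def gadgetWord (n N : ℕ) (w : List Γ) : List (GadgetLetter Γ) :=
  joinSep sep (List.replicate n (List.replicate N dummy) ++
    (start :: lift w) :: List.replicate n (List.replicate N dummy))

theorem isRational_gadgetConstraint (hr : ∀ i x, IsRational (r i x)) (v : GadgetVar (Fin n) X) :
    IsRational (gadgetConstraint N r v) := by
  cases v with
  | pre | suf => exact (isRational_singleton _).kstar
  | sep i => exact isRational_singleton _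
  | tag i => exact (isRational_singleton _).add (isRational_wordsOver (Set.finite_singleton _))
  | var i x => exact ((hr i x).morphImage _).add (isRational_wordsOver (Set.finite_singleton _))

theorem flatMap_gadgetPattern {s : GadgetVar (Fin n) X → List (GadgetLetter Γ)}
    (h_sep : ∀ i, s (.sep i) = [sep]) :
    (gadgetPattern p).flatMap s = s .pre ++
      joinSep sep ((List.finRange n).map fun i => (gadgetBlock p i).flatMap s) ++ s .suf := by
  simp [gadgetPattern, joinSep, List.flatMap_assoc, List.flatMap_map, h_sep]

theorem sep_notMem_of_mem_gadgetConstraint {i : Fin n} {v : GadgetVar (Fin n) X}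
    (hv : v ∈ gadgetBlock p i) {u : List (GadgetLetter Γ)} (hu : u ∈ gadgetConstraint N r v) :
    sep ∉ u := by
  intro h_sep
  rw [gadgetBlock, List.mem_cons, List.mem_map] at hv
  obtain rfl | ⟨x, -, rfl⟩ := hv
  · obtain rfl | hu := hu
    · simp at h_sep
    · cases hu _ h_sep
  · obtain ⟨t, -, rfl⟩ | hu := hu
    · obtain ⟨g, -, hg⟩ := mem_lift.1 h_sep
      cases hg
    · cases hu _ h_sep

theorem mem_lang_of_gadgetBlock_eq {s : GadgetVar (Fin n) X → List (GadgetLetter Γ)} {i : Fin n}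
    (hs : ∀ v ∈ gadgetBlock p i, s v ∈ gadgetConstraint N r v ∧ s v ≠ []) {w : List Γ}
    (h : (gadgetBlock p i).flatMap s = start :: lift w) : w ∈ Lang (p i) (r i) := by
  rw [gadgetBlock, List.forall_mem_cons, List.forall_mem_map] at hs
  rw [gadgetBlock, List.flatMap_cons, List.flatMap_map] at h
  obtain ⟨⟨h_tag, h_tag_ne⟩, h_var⟩ := hs
  have h_start : s (.tag i) = [start] := by
    refine h_tag.resolve_right fun h_dummy => ?_
    obtain ⟨c, u, hcu⟩ := List.exists_cons_of_ne_nil h_tag_ne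
    rw [hcu, List.cons_append, List.cons.injEq] at h
    cases h.1 ▸ h_dummy c (hcu ▸ List.mem_cons_self)
  rw [h_start, List.singleton_append, List.cons.injEq, eq_self, true_and] at h
  have h_lang : lift w ∈ Lang (p i) fun x => morphImage (fun g => [base g]) (r i x) := by
    refine ⟨fun x => s (.var i x), fun x hx => ⟨(h_var x hx).1.resolve_right fun h_dummy => ?_,
      (h_var x hx).2⟩, h⟩
    obtain ⟨c, hc⟩ := List.exists_mem_of_ne_nil _ (h_var x hx).2
    obtain ⟨g, -, hg⟩ := mem_lift.1 (h ▸ List.mem_flatMap_of_mem hx hc)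
    cases hg.trans (h_dummy c hc)
  rw [lang_morphImage (fun _ => List.cons_ne_nil _ _)] at h_lang
  obtain ⟨w', hw', h_eq⟩ := h_lang
  exact lift_injective h_eq ▸ hw'

theorem exists_mem_lang_of_gadgetWord_mem {w : List Γ}
    (h : gadgetWord n N w ∈ Lang (gadgetPattern p) (gadgetConstraint N r)) :
    ∃ i, w ∈ Lang (p i) (r i) := by
  obtain ⟨s, hs, h_eq⟩ := h
  have hs_block (i) : ∀ v ∈ gadgetBlock p i, s v ∈ gadgetConstraint N r v ∧ s v ≠ [] :=
    fun v hv => hs v (by simpa [gadgetPattern] using .inr (.inl ⟨i, .inl hv⟩))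
  obtain ⟨j, h_pre⟩ := mem_kstar_singleton_append.1 (hs .pre (by simp [gadgetPattern])).1
  obtain ⟨k, h_suf⟩ := mem_kstar_singleton_append.1 (hs .suf (by simp [gadgetPattern])).1
  rw [flatMap_gadgetPattern fun i => (hs (.sep i) (by simp [gadgetPattern])).1, h_pre, h_suf,
    ← joinSep_append, ← joinSep_append] at h_eq
  have h_blocks := joinSep_inj (by
    simp only [List.mem_append, List.mem_map, List.mem_replicate]
    rintro b ((⟨-, rfl⟩ | ⟨i, -, rfl⟩) | ⟨-, rfl⟩)
    · simp
    · simpa using fun v hv => sep_notMem_of_mem_gadgetConstraint hv (hs_block i v hv).1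
    · simp) (by simp +contextual [or_imp, mem_lift]) h_eq
  have h_mem : start :: lift w ∈ List.replicate j (List.replicate N dummy) ++
      (List.finRange n).map (fun i => (gadgetBlock p i).flatMap s) ++
        List.replicate k (List.replicate N dummy) := by
    simp [h_blocks]
  have h_ne : start :: lift w ≠ List.replicate N dummy := fun h => by
    cases List.eq_of_mem_replicate (h ▸ List.mem_cons_self : start ∈ List.replicate N dummy)
  simp only [List.mem_append, List.mem_replicate, h_ne, and_false, false_or, or_false,
    List.mem_map] at h_mem
  obtain ⟨i, -, hi⟩ := h_mem
  exact ⟨i, mem_lang_of_gadgetBlock_eq (hs_block i) hi⟩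

/-- The substitution that matches the marked block of `gadgetWord` against the block of `p i` by
means of `s`, leaving `j` dummy blocks to `pre` and `k` to `suf`. -/
def gadgetSubst (N : ℕ) (p : Fin n → List X) (i : Fin n) (j k : ℕ) (s : X → List Γ) :
    GadgetVar (Fin n) X → List (GadgetLetter Γ)
  | .pre => joinSep sep (List.replicate j (List.replicate N dummy))
  | .suf => joinSep sep (List.replicate k (List.replicate N dummy))
  | .sep _ => [sep]
  | .tag i' => if i' = i then [start] else List.replicate (N - (p i').length) dummy
  | .var i' x => if i' = i then lift (s x) else [dummy]

theorem flatMap_gadgetSubst_self (i : Fin n) (j k : ℕ) (s : X → List Γ) :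
    (gadgetBlock p i).flatMap (gadgetSubst N p i j k s) = start :: lift ((p i).flatMap s) := by
  simp [gadgetBlock, gadgetSubst, List.flatMap_map, lift, List.flatMap_assoc]

theorem flatMap_gadgetSubst_of_ne {i i' : Fin n} (h_ne : i' ≠ i) (hN : (p i').length < N)
    (j k : ℕ) (s : X → List Γ) :
    (gadgetBlock p i').flatMap (gadgetSubst N p i j k s) = List.replicate N dummy := by
  simp [gadgetBlock, gadgetSubst, List.flatMap_map, h_ne, ← List.map_eq_flatMap, List.map_const',
    hN.le]

theorem gadgetSubst_valid (hN : ∀ i, (p i).length < N) {i : Fin n} {s : X → List Γ}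
    (hs : ∀ x ∈ p i, s x ∈ r i x ∧ s x ≠ []) (j k : ℕ) :
    ∀ v ∈ gadgetPattern p, gadgetSubst N p i (j + 1) (k + 1) s v ∈ gadgetConstraint N r v ∧
      gadgetSubst N p i (j + 1) (k + 1) s v ≠ [] := by
  have h_dummies (m) : List.replicate m dummy ∈ (wordsOver {dummy} : Language (GadgetLetter Γ)) :=
    mem_wordsOver_singleton.2 ⟨m, rfl⟩
  intro v hv
  cases v with
  | pre | suf =>
    exact ⟨mem_kstar_singleton_append.2 ⟨_, rfl⟩, by simp [gadgetSubst, joinSep_cons,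
      List.replicate_succ]⟩
  | sep => exact ⟨rfl, List.cons_ne_nil _ _⟩
  | tag i' =>
    simp only [gadgetSubst]
    split_ifs with h
    · exact ⟨.inl rfl, List.cons_ne_nil _ _⟩
    · exact ⟨.inr (h_dummies _), by simpa using Nat.sub_ne_zero_of_lt (hN i')⟩
  | var i' x =>
    have hx : x ∈ p i' := by simpa [gadgetPattern, gadgetBlock] using hv
    simp only [gadgetSubst]
    split_ifs with h
    · subst h
      refine ⟨.inl ⟨s x, (hs x hx).1, rfl⟩, ?_⟩
      simpa [lift, ← List.map_eq_flatMap] using (hs x hx).2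
    · exact ⟨.inr (h_dummies 1), List.cons_ne_nil _ _⟩

theorem gadgetWord_mem (hN : ∀ i, (p i).length < N) {i : Fin n} {w : List Γ}
    (hw : w ∈ Lang (p i) (r i)) :
    gadgetWord n N w ∈ Lang (gadgetPattern p) (gadgetConstraint N r) := by
  obtain ⟨s, hs, rfl⟩ := hw
  obtain ⟨K, M, h_split⟩ := List.append_of_mem (List.mem_finRange i)
  refine ⟨gadgetSubst N p i (M.length + 1) (K.length + 1) s, gadgetSubst_valid hN hs _ _, ?_⟩
  have h_nodup := h_split ▸ List.nodup_finRange n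
  have h_length : K.length + (M.length + 1) = n := by
    simpa using (congrArg List.length h_split).symm
  have h_dummy {Q : List (Fin n)} (hQ : i ∉ Q) : Q.map (fun i' => (gadgetBlock p i').flatMap
      (gadgetSubst N p i (M.length + 1) (K.length + 1) s)) =
        List.replicate Q.length (List.replicate N dummy) :=
    List.map_eq_replicate_iff.2 fun i' hi' =>
      flatMap_gadgetSubst_of_ne (ne_of_mem_of_not_mem hi' hQ) (hN i') _ _ s
  have hK : i ∉ K := fun hi => (List.disjoint_of_nodup_append h_nodup) hi List.mem_cons_self
  have hM : i ∉ M := (List.nodup_cons.1 (List.nodup_append.1 h_nodup).2.1).1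
  rw [flatMap_gadgetPattern fun _ => rfl, h_split, List.map_append, List.map_cons, h_dummy hK,
    h_dummy hM, flatMap_gadgetSubst_self]
  simp only [gadgetSubst, gadgetWord, ← joinSep_append, ← List.append_assoc,
    List.replicate_append_replicate]
  rw [List.append_assoc, List.cons_append, List.replicate_append_replicate]
  congr 4 <;> omega

end Gadget

section LetterCode

variable {Γ σ : Type*} {a b : σ}

/-- The code of the letters of a countable alphabet, enumerated by `i`, as words over `{a, b}`. -/
def letterCode (i : Γ → ℕ) (a b : σ) (c : Γ) : List σ := List.replicate (i c) a ++ [b]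

theorem flatMap_letterCode_injective {i : Γ → ℕ} (hi : Function.Injective i) (hab : a ≠ b) :
    Function.Injective fun w : List Γ => w.flatMap (letterCode i a b) := by
  have h_joinSep (w : List Γ) : w.flatMap (letterCode i a b) =
      joinSep b (w.map fun c => List.replicate (i c) a) :=
    (List.flatMap_map _ (· ++ [b]) w).symm
  have h_notMem (w : List Γ) : ∀ u ∈ w.map fun c => List.replicate (i c) a, b ∉ u :=
    List.forall_mem_map.2 fun c _ h => hab (List.eq_of_mem_replicate h).symm
  intro v w h
  simp only [h_joinSep] at h
  refine List.map_injective_iff.2 (fun c d hcd => hi ?_)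
    (joinSep_inj (h_notMem v) (h_notMem w) h)
  simpa using congrArg List.length hcd

theorem IsNEUnion.exists_mem_lang_iff [Countable Γ] {L : Language Γ} (hL : IsNEUnion L)
    (hab : a ≠ b) :
    ∃ (x y : List σ) (h : Γ → List σ) (p : List ℕ) (r : ℕ → Language σ),
      (∀ z, IsRational (r z)) ∧ x ≠ [] ∧ ∀ w, x ++ w.flatMap h ++ y ∈ Lang p r ↔ w ∈ L := by
  obtain ⟨n, p, r, hr, rfl⟩ := hL
  obtain ⟨N, hN⟩ : ∃ N, ∀ i, (p i).length < N := by
    obtain ⟨M, hM⟩ := (Set.finite_range fun i => (p i).length).bddAbove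
    exact ⟨M + 1, fun i => Nat.lt_succ_of_le (hM ⟨i, rfl⟩)⟩
  obtain ⟨p', r', hr', h_lang⟩ := exists_nat_lang_eq (gadgetPattern p)
    (isRational_gadgetConstraint (N := N) hr)
  obtain ⟨i, hi⟩ := exists_injective_nat (GadgetLetter Γ)
  let D : List (GadgetLetter Γ) := joinSep .sep (List.replicate n (List.replicate N .dummy))
  let code := letterCode i a b
  refine ⟨(D ++ [GadgetLetter.start]).flatMap code, (.sep :: D).flatMap code,
    fun g => code (.base g), p', fun z => morphImage code (r' z),
    fun z => (hr' z).morphImage code, by simp [code, letterCode], fun w => ?_⟩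
  have h_word : (D ++ [GadgetLetter.start]).flatMap code ++ w.flatMap (fun g => code (.base g)) ++
      (.sep :: D).flatMap code = (gadgetWord n N w).flatMap code := by
    simp [gadgetWord, joinSep_append, joinSep_cons, lift, List.flatMap_assoc, D]
  rw [h_word, lang_morphImage (by simp [code, letterCode]), mem_morphImage, h_lang]
  simp only [(flatMap_letterCode_injective hi hab).eq_iff, code]
  rw [exists_eq_right, Language.mem_iSup]
  exact ⟨exists_mem_lang_of_gadgetWord_mem, fun ⟨i, hi⟩ => gadgetWord_mem hN hi⟩

end LetterCode

/-! ### Languages of mismatches -/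

section Mismatch

variable {Γ T : Type*}

theorem mem_langE_of_nonempty {r : T → Language Γ} (hr : ∀ t, Set.Nonempty (r t)) {p : List T}
    {w : List Γ} : w ∈ LangE p r ↔ ∃ s : T → List Γ, (∀ t, s t ∈ r t) ∧ p.flatMap s = w := by
  classical
  refine ⟨fun ⟨s, hs, hw⟩ => ?_, fun ⟨s, hs, hw⟩ => ⟨s, fun t _ => hs t, hw⟩⟩
  choose v hv using hr
  refine ⟨fun t => if t ∈ p then s t else v t, fun t => ?_, ?_⟩
  · by_cases ht : t ∈ p
    · simpa only [if_pos ht] using hs t ht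
    · simp only [if_neg ht]
      exact hv t
  · exact (List.flatMap_congr fun t ht => if_pos ht).trans hw

theorem incompRel_isPrefix_iff {u s : List Γ} :
    IncompRel (· <+: ·) u s ↔
      ∃ b c d u' s', c ≠ d ∧ u = b ++ d :: u' ∧ s = b ++ c :: s' := by
  constructor
  · intro h
    induction u generalizing s with
    | nil => exact absurd List.nil_prefix h.1
    | cons d u ih =>
      obtain _ | ⟨c, s⟩ := s
      · exact absurd List.nil_prefix h.2
      by_cases hcd : c = d
      · subst hcd
        simp only [IncompRel, List.prefix_cons_inj] at h
        obtain ⟨b, c', d', u', s', h_ne, rfl, rfl⟩ := ih h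
        exact ⟨c :: b, c', d', u', s', h_ne, rfl, rfl⟩
      · exact ⟨[], c, d, u, s, hcd, rfl, rfl⟩
  · rintro ⟨b, c, d, u', s', h_ne, rfl, rfl⟩
    simp [IncompRel, List.prefix_append_right_inj, h_ne, h_ne.symm]

theorem flatMap_eq_append_cons_iff {Q : List T} {x : T → List Γ} {a u : List Γ} {d : Γ} :
    Q.flatMap x = a ++ d :: u ↔ ∃ (i : Fin Q.length) (b e : List Γ), x Q[i] = b ++ d :: e ∧
      a = (Q.take i).flatMap x ++ b ∧ u = e ++ (Q.drop (i + 1)).flatMap x := by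
  constructor
  · intro h
    induction Q generalizing a with
    | nil => simp at h
    | cons t Q ih =>
      rw [List.flatMap_cons] at h
      obtain ⟨a', rfl, h_tail⟩ | ⟨e, h_head, h_tail⟩ := List.append_eq_append_iff.1 h
      · obtain ⟨i, b, e, hi, rfl, rfl⟩ := ih h_tail
        exact ⟨i.succ, b, e, hi, by simp, by simp⟩
      · obtain _ | ⟨d', e⟩ := e
        · obtain ⟨i, b, e, hi, h_nil, rfl⟩ := ih (a := []) h_tail.symm
          exact ⟨i.succ, b, e, hi, by simp_all, by simp⟩
        · obtain ⟨rfl, rfl⟩ := List.cons_eq_cons.1 h_tail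
          exact ⟨⟨0, Nat.succ_pos _⟩, a, e, h_head, by simp, by simp⟩
  · rintro ⟨i, b, e, hi, rfl, rfl⟩
    calc Q.flatMap x = (Q.take i).flatMap x ++ (x Q[i] ++ (Q.drop (i + 1)).flatMap x) := by
          rw [← List.flatMap_cons, ← List.flatMap_append]
          exact congrArg (List.flatMap x) (by simp)
      _ = _ := by rw [hi]; simp

/-- The words `z ++ x(P) ++ s` in which `s` and `x(Q)` differ in some letter, where the values of
the valuation `x` are constrained by `r`. -/
def ErrLang (r : T → Language Γ) (P Q : List T) : Language Γ :=
  {w : List Γ | ∃ x : T → List Γ, (∀ t, x t ∈ r t) ∧ ∃ z s,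
    IncompRel (· <+: ·) (Q.flatMap x) s ∧ w = z ++ P.flatMap x ++ s}

/-- Languages in which membership of `u ++ d :: v` amounts to independent rational conditions on
`u` and on `v`. -/
def IsSplittable (L : Language Γ) : Prop :=
  ∀ d, ∃ A B : Language Γ, IsRational A ∧ IsRational B ∧
    ∀ u v, u ++ d :: v ∈ L ↔ u ∈ A ∧ v ∈ B

theorem isSplittable_singleton (a : Γ) : IsSplittable ({[a]} : Language Γ) := by
  intro d
  by_cases h : d = a
  · refine ⟨1, 1, isRational_one, isRational_one, fun u v => ?_⟩
    rw [Language.mem_one, Language.mem_one]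
    exact Set.mem_singleton_iff.trans (by simp [List.append_eq_singleton_iff, h])
  · refine ⟨0, 0, isRational_zero, isRational_zero, fun u v => ?_⟩
    exact Set.mem_singleton_iff.trans
      (by simp [List.append_eq_singleton_iff, h, Language.notMem_zero])

theorem isSplittable_wordsOver {S : Set Γ} (hS : S.Finite) : IsSplittable (wordsOver S) := by
  intro d
  by_cases h : d ∈ S
  · refine ⟨wordsOver S, wordsOver S, isRational_wordsOver hS, isRational_wordsOver hS,
      fun u v => ?_⟩
    simp [mem_wordsOver, or_imp, forall_and, h]
  · refine ⟨0, 0, isRational_zero, isRational_zero, fun u v => ?_⟩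
    simp [mem_wordsOver, or_imp, forall_and, h, Language.notMem_zero]

end Mismatch

/-- The variables of a pattern for the mismatches at a position inside the value of one variable
from `T`, whose value is split into the parts `left`, `mid` and `right`. -/
inductive ErrVar (T : Type*)
  | before
  | left
  | mid
  | right
  | after
  | var (t : T)
  deriving Countable

section ErrLang

variable {Γ T : Type*} {r : T → Language Γ} {A B : Language Γ} {c d : Γ}

/-- The representation of the variable `u` when the value of `t` is split. -/
def errSplit [DecidableEq T] (t u : T) : List (ErrVar T) :=
  if u = t then [.left, .mid, .right] else [.var u]

/-- The constraints of the pattern for the mismatches of the letter `c` against a letter `d` that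
occurs in the value of the split variable after a word from `A` and before a word from `B`. -/
def errConstraint (r : T → Language Γ) (A B : Language Γ) (c d : Γ) : ErrVar T → Language Γ
  | .before => wordsOver Set.univ
  | .left => A
  | .mid => {[d]}
  | .right => B
  | .after => {[c]} * wordsOver Set.univ
  | .var t => r t

/-- The pattern for the mismatches that occur within the value of `t` after the value of `P`. -/
def errPattern [DecidableEq T] (t : T) (P : List T) : List (ErrVar T) :=
  .before :: P.flatMap (errSplit t) ++ [.left, .after]

theorem flatMap_errPattern [DecidableEq T] {y : ErrVar T → List Γ} (h_mid : y .mid = [d])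
    (t : T) (P : List T) :
    (errPattern t P).flatMap y = y .before ++ P.flatMap (fun u =>
      if u = t then y .left ++ d :: y .right else y (.var u)) ++ y .left ++ y .after := by
  have h_split (u) : (errSplit t u).flatMap y =
      if u = t then y .left ++ d :: y .right else y (.var u) := by
    unfold errSplit
    split_ifs <;> simp [h_mid]
  simp [errPattern, List.flatMap_assoc, h_split]

theorem isRational_errConstraint [Finite Γ] (hr : ∀ t, IsRational (r t)) (hA : IsRational A)
    (hB : IsRational B) (c d : Γ) (v : ErrVar T) : IsRational (errConstraint r A B c d v) := by
  cases v with
  | before => exact isRational_wordsOver Set.finite_univ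
  | left => exact hA
  | mid => exact isRational_singleton _
  | right => exact hB
  | after => exact (isRational_singleton _).mul (isRational_wordsOver Set.finite_univ)
  | var t => exact hr t

theorem errConstraint_nonempty (hr : ∀ t, Set.Nonempty (r t)) (hA : Set.Nonempty A)
    (hB : Set.Nonempty B) (c d : Γ) (v : ErrVar T) :
    Set.Nonempty (errConstraint r A B c d v) := by
  cases v with
  | before => exact ⟨[], fun _ _ => trivial⟩
  | left => exact hA
  | mid => exact ⟨[d], rfl⟩
  | right => exact hB
  | after => exact ⟨[c], [c], rfl, [], fun _ _ => trivial, rfl⟩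
  | var t => exact hr t

theorem mem_langE_errPattern [DecidableEq T] {t : T} (hr : ∀ t, Set.Nonempty (r t))
    (hA : Set.Nonempty A) (hB : Set.Nonempty B)
    (h_split : ∀ u v, u ++ d :: v ∈ r t ↔ u ∈ A ∧ v ∈ B) {P : List T} {w : List Γ} :
    w ∈ LangE (errPattern t P) (errConstraint r A B c d) ↔
      ∃ x : T → List Γ, (∀ t, x t ∈ r t) ∧ ∃ b e z s, x t = b ++ d :: e ∧
        w = z ++ P.flatMap x ++ b ++ c :: s := by
  rw [mem_langE_of_nonempty (errConstraint_nonempty hr hA hB c d)]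
  constructor
  · rintro ⟨y, hy, rfl⟩
    obtain ⟨_, rfl, s, -, h_after⟩ := hy .after
    refine ⟨_, fun u => ?_, y .left, y .right, y .before, s, if_pos rfl,
      (flatMap_errPattern (hy .mid) t P).trans (by rw [← h_after]; rfl)⟩
    split_ifs with hu
    · exact hu ▸ (h_split _ _).2 ⟨hy .left, hy .right⟩
    · exact hy (.var u)
  · rintro ⟨x, hx, b, e, z, s, ht, rfl⟩
    let y : ErrVar T → List Γ := fun
      | .before => z
      | .left => b
      | .mid => [d]
      | .right => e
      | .after => c :: s
      | .var u => x u
    have h_value : (fun u => if u = t then y .left ++ d :: y .right else y (.var u)) = x :=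
      funext fun u => ite_eq_right_iff.2 fun hu => hu ▸ ht.symm
    obtain ⟨hb, he⟩ := (h_split b e).1 (ht ▸ hx t)
    refine ⟨y, fun v => ?_, by rw [flatMap_errPattern rfl, h_value]⟩
    cases v with
    | before => exact fun _ _ => trivial
    | left => exact hb
    | mid => rfl
    | right => exact he
    | after => exact ⟨[c], rfl, s, fun _ _ => trivial, rfl⟩
    | var u => exact hx u

theorem mem_errLang_iff {P Q : List T} {w : List Γ} :
    w ∈ ErrLang r P Q ↔ ∃ (i : Fin Q.length) (c d : Γ), c ≠ d ∧
      ∃ x : T → List Γ, (∀ t, x t ∈ r t) ∧ ∃ b e z s, x Q[i] = b ++ d :: e ∧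
        w = z ++ (P ++ Q.take i).flatMap x ++ b ++ c :: s := by
  constructor
  · rintro ⟨x, hx, z, s, h_incomp, rfl⟩
    obtain ⟨a, c, d, u, s, h_ne, h_value, rfl⟩ := incompRel_isPrefix_iff.1 h_incomp
    obtain ⟨i, b, e, hi, rfl, -⟩ := flatMap_eq_append_cons_iff.1 h_value
    exact ⟨i, c, d, h_ne, x, hx, b, e, z, s, hi, by simp⟩
  · rintro ⟨i, c, d, h_ne, x, hx, b, e, z, s, hi, rfl⟩
    exact ⟨x, hx, z, (Q.take i).flatMap x ++ b ++ c :: s, incompRel_isPrefix_iff.2 ⟨_, c, d, _, _,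
      h_ne, flatMap_eq_append_cons_iff.2 ⟨i, b, e, hi, rfl, rfl⟩, rfl⟩, by simp⟩

end ErrLang

theorem isNEUnion_errLang {Γ T : Type*} [Finite Γ] [Countable T] {r : T → Language Γ}
    (hr : ∀ t, IsRational (r t)) (h_nonempty : ∀ t, Set.Nonempty (r t))
    (h_split : ∀ t, IsSplittable (r t)) (P Q : List T) : IsNEUnion (ErrLang r P Q) := by
  classical
  choose A B hA hB hAB using h_split
  have h_eq : ErrLang r P Q = ⨆ (i : Fin Q.length) (c : Γ) (d : Γ) (_ : c ≠ d)
      (_ : Set.Nonempty (A Q[i] d)) (_ : Set.Nonempty (B Q[i] d)),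
      LangE (errPattern Q[i] (P ++ Q.take i)) (errConstraint r (A Q[i] d) (B Q[i] d) c d) := by
    ext w
    simp only [Language.mem_iSup, mem_errLang_iff]
    refine exists_congr fun i => exists₂_congr fun c d => ?_
    rw [exists_prop]
    refine and_congr_right fun _ => ⟨?_, ?_⟩
    · rintro ⟨x, hx, b, e, h⟩
      have h_mem := (hAB Q[i] d b e).1 (h.choose_spec.choose_spec.1 ▸ hx Q[i])
      exact ⟨⟨b, h_mem.1⟩, ⟨e, h_mem.2⟩, (mem_langE_errPattern h_nonempty ⟨b, h_mem.1⟩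
        ⟨e, h_mem.2⟩ (hAB _ d)).2 ⟨x, hx, b, e, h⟩⟩
    · rintro ⟨hA', hB', hw⟩
      exact (mem_langE_errPattern h_nonempty hA' hB' (hAB _ d)).1 hw
  rw [h_eq]
  exact .iSup fun i => .iSup fun c => .iSup fun d => .iSup fun _ => .iSup fun _ => .iSup fun _ =>
    isNEUnion_langE _ (isRational_errConstraint hr (hA _ d) (hB _ d) c d)

/-! ### Stack machines -/

/-- Machines with a stack for each `k : K`. In the state `q` the machine pops the top letter `v` of
`stack q` (`v = none` if that stack is empty), pushes the word `(next q v).2` onto `stack q`, and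
goes to the state `(next q v).1`, where `none` is the halting state. -/
structure StackMachine (K Γ Q : Type*) where
  stack : Q → K
  next : Q → Option Γ → Option Q × List Γ

/-- The letters of encoded configurations: states, stack letters, and a marker for the bottom of a
stack. -/
inductive CfgLetter (Γ Q : Type*)
  | state (q : Option Q)
  | letter (a : Γ)
  | bottom
  deriving Countable

instance {Γ Q : Type*} [Finite Γ] [Finite Q] : Finite (CfgLetter Γ Q) :=
  .of_surjective
    (fun | .inl q => .state q | .inr (some a) => .letter a | .inr none => .bottom :
      Option Q ⊕ Option Γ → CfgLetter Γ Q)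
    (fun | .state q => ⟨.inl q, rfl⟩ | .letter a => ⟨.inr a, rfl⟩ | .bottom => ⟨.inr none, rfl⟩)

section Encoding

variable {K Γ Q : Type*} [Fintype K]

/-- The encoding of the stacks `S`. -/
noncomputable def encodeStacks (Q : Type*) (S : K → List Γ) : List (CfgLetter Γ Q) :=
  joinSep .bottom (Finset.univ.toList.map fun k => (S k).map .letter)

/-- The encoding of the configuration with state `c.1` and stacks `c.2`. -/
noncomputable def encodeCfg (c : Option Q × (K → List Γ)) : List (CfgLetter Γ Q) :=
  .state c.1 :: encodeStacks Q c.2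

theorem state_notMem_encodeStacks (q : Option Q) (S : K → List Γ) :
    .state q ∉ encodeStacks Q S := by
  simp [encodeStacks, joinSep]

theorem encodeCfg_eq_append_state_iff {c : Option Q × (K → List Γ)} {q : Option Q}
    {z s : List (CfgLetter Γ Q)} :
    encodeCfg c = z ++ .state q :: s ↔ z = [] ∧ c.1 = q ∧ encodeStacks Q c.2 = s := by
  obtain _ | ⟨b, z⟩ := z
  · simp [encodeCfg]
  · refine iff_of_false (fun h => state_notMem_encodeStacks q c.2 ?_) (by simp)
    rw [(List.cons_eq_cons.1 h).2]
    simp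

theorem encodeCfg_append_inj {c d : Option Q × (K → List Γ)} {u v : List (CfgLetter Γ Q)}
    (h : encodeCfg c ++ u = encodeCfg d ++ v) : c = d ∧ u = v := by
  have h_bottom (S : K → List Γ) :
      ∀ b ∈ Finset.univ.toList.map fun k => (S k).map CfgLetter.letter,
        (.bottom : CfgLetter Γ Q) ∉ b := by
    simp
  obtain ⟨h_state, h_stacks⟩ := List.cons_eq_cons.1 h
  obtain ⟨h_map, rfl⟩ := joinSep_append_inj (h_bottom c.2) (h_bottom d.2) (by simp) h_stacks
  refine ⟨Prod.ext (CfgLetter.state.inj h_state) (funext fun k => ?_), rfl⟩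
  exact List.map_injective_iff.2 (fun a b => CfgLetter.letter.inj)
    (List.map_inj_left.1 h_map k (by simp))

theorem exists_encodeCfg_update_eq [DecidableEq K] (q : Option Q) (S : K → List Γ) (k : K) :
    ∃ u v : List (CfgLetter Γ Q), ∀ l,
      encodeCfg (q, Function.update S k l) = u ++ l.map .letter ++ v := by
  obtain ⟨s, t, h_univ⟩ := List.append_of_mem (Finset.mem_toList.2 (Finset.mem_univ k))
  obtain ⟨hs, ht⟩ : k ∉ s ∧ k ∉ t := by
    simpa [← not_or] using
      (List.nodup_middle.1 (h_univ ▸ Finset.nodup_toList (Finset.univ : Finset K))).notMem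
  have h_update {s : List K} (hs : k ∉ s) (l) :
      s.map (fun i => (Function.update S k l i).map CfgLetter.letter) =
        (s.map fun i => (S i).map .letter : List (List (CfgLetter Γ Q))) :=
    List.map_congr_left fun i hi => by rw [Function.update_of_ne (ne_of_mem_of_not_mem hi hs)]
  refine ⟨.state q :: joinSep .bottom (s.map fun i => (S i).map .letter),
    .bottom :: joinSep .bottom (t.map fun i => (S i).map .letter), fun l => ?_⟩
  simp [encodeCfg, encodeStacks, h_univ, joinSep_append, joinSep_cons, h_update hs, h_update ht]

end Encoding

namespace StackMachine

section Step

variable {K Γ Q : Type*} [DecidableEq K] (M : StackMachine K Γ Q)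

/-- One step of the machine, on configurations given by a state and the stacks. -/
def step : Option Q × (K → List Γ) → Option (Option Q × (K → List Γ))
  | (none, _) => none
  | (some q, S) =>
    let k := M.stack q
    let a := M.next q (S k).head?
    some (a.1, Function.update S k (a.2 ++ (S k).tail))

variable {M}

theorem step_eq_none_iff {c : Option Q × (K → List Γ)} : M.step c = none ↔ c.1 = none := by
  obtain ⟨_ | q, S⟩ := c <;> simp [step]

/-- The stacks `S` with the word `w` put on top of stack `k`, whose content is dropped when
`v = none`. -/
def window (k : K) (v : Option Γ) (w : List Γ) (S : K → List Γ) : K → List Γ :=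
  Function.update S k (w ++ v.elim [] fun _ => S k)

theorem step_eq_some_iff {c c' : Option Q × (K → List Γ)} :
    M.step c = some c' ↔ ∃ q v S, c = (some q, window (M.stack q) v v.toList S) ∧
      c' = ((M.next q v).1, window (M.stack q) v (M.next q v).2 S) := by
  constructor
  · intro h
    obtain ⟨_ | q, S⟩ := c
    · cases h
    rw [← Option.some_inj.1 h]
    refine ⟨q, (S (M.stack q)).head?,
      Function.update S (M.stack q) (S (M.stack q)).tail, ?_, ?_⟩
    all_goals
      rcases hS : S (M.stack q) <;> simp [window, hS]
  · rintro ⟨q, v, S, rfl, rfl⟩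
    cases v <;> simp [step, window]

section Mismatches

variable [Fintype K]

variable (M) in
/-- The words that contain the encoding of a configuration whose successor exists but whose encoding
differs in some letter from what follows. -/
def errors : Language (CfgLetter Γ Q) :=
  {w : List (CfgLetter Γ Q) | ∃ c c', M.step c = some c' ∧ ∃ z s,
    IncompRel (· <+: ·) (encodeCfg c') s ∧ w = z ++ encodeCfg c ++ s}

theorem append_mem_errors {s : List (CfgLetter Γ Q)} (h : s ∈ M.errors) (z) :
    z ++ s ∈ M.errors := by
  obtain ⟨c, c', h_step, z', s, h_incomp, rfl⟩ := h
  exact ⟨c, c', h_step, z ++ z', s, h_incomp, by simp⟩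

theorem notMem_errors {w : List (CfgLetter Γ Q)} (h : ∀ q, .state (some q) ∉ w) :
    w ∉ M.errors := by
  rintro ⟨c, c', h_step, z, s, -, rfl⟩
  obtain ⟨q, v, S, rfl, -⟩ := step_eq_some_iff.1 h_step
  exact h q (by simp [encodeCfg])

theorem encodeCfg_append_mem_errors_iff {c c' : Option Q × (K → List Γ)} (h : M.step c = some c')
    {s : List (CfgLetter Γ Q)} : encodeCfg c ++ s ∈ M.errors ↔
      IncompRel (· <+: ·) (encodeCfg c') s ∨ s ∈ M.errors := by
  constructor
  · rintro ⟨d, d', h_step, z, t, h_incomp, h_eq⟩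
    rw [List.append_assoc] at h_eq
    obtain ⟨z, rfl, rfl⟩ | ⟨_ | ⟨b, u⟩, h_enc, h_tail⟩ := List.append_eq_append_iff.1 h_eq
    · exact .inr ⟨d, d', h_step, z, t, h_incomp, by simp⟩
    · exact .inr ⟨d, d', h_step, [], t, h_incomp, by simpa using h_tail.symm⟩
    · obtain ⟨rfl, -⟩ := List.cons_eq_cons.1 h_tail
      obtain ⟨rfl, -⟩ := encodeCfg_eq_append_state_iff.1 h_enc
      obtain ⟨rfl, rfl⟩ := encodeCfg_append_inj h_eq
      exact .inl (Option.some_inj.1 (h.symm.trans h_step) ▸ h_incomp)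
  · rintro (h_incomp | h_mem)
    · exact ⟨c, c', h, [], s, h_incomp, rfl⟩
    · exact append_mem_errors h_mem _

theorem exists_notMem_errors_of_dom {c : Option Q × (K → List Γ)}
    (h : (StateTransition.eval M.step c).Dom) :
    ∃ z, encodeCfg c ++ (z ++ [.state none]) ∉ M.errors := by
  obtain ⟨b, hb⟩ := Part.dom_iff_mem.1 h
  obtain ⟨h_reach, h_none⟩ := StateTransition.mem_eval.1 hb
  clear hb
  induction h_reach using Relation.ReflTransGen.head_induction_on with
  | refl =>
    refine ⟨[], notMem_errors fun q => ?_⟩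
    simp [encodeCfg, step_eq_none_iff.1 h_none, state_notMem_encodeStacks]
  | @head c c' h_step _ ih =>
    obtain ⟨z, hz⟩ := ih (StateTransition.reaches_eval (.single h_step) ▸ h)
    refine ⟨encodeCfg c' ++ z, ?_⟩
    rw [List.append_assoc, encodeCfg_append_mem_errors_iff h_step]
    exact not_or_intro (fun h_incomp => h_incomp.1 (List.prefix_append _ _)) hz

theorem mem_errors_of_not_dom {c : Option Q × (K → List Γ)}
    (h : ¬(StateTransition.eval M.step c).Dom) (z : List (CfgLetter Γ Q)) :
    encodeCfg c ++ (z ++ [.state none]) ∈ M.errors := by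
  induction hn : z.length using Nat.strong_induction_on generalizing c z with | _ n ih
  subst hn
  have h_ne (c : Option Q × (K → List Γ)) (hc : ¬(StateTransition.eval M.step c).Dom)
      (z s : List (CfgLetter Γ Q)) : encodeCfg c ≠ z ++ .state none :: s := fun h_eq =>
    hc (Part.dom_iff_mem.2 ⟨c, StateTransition.mem_eval.2
      ⟨.refl, step_eq_none_iff.2 (encodeCfg_eq_append_state_iff.1 h_eq).2.1⟩⟩)
  obtain ⟨c', h_step⟩ : ∃ c', M.step c = some c' := by
    refine Option.ne_none_iff_exists'.1 fun h_none => h (Part.dom_iff_mem.2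
      ⟨c, StateTransition.mem_eval.2 ⟨.refl, h_none⟩⟩)
  rw [StateTransition.reaches_eval (.single h_step)] at h
  rw [encodeCfg_append_mem_errors_iff h_step, or_iff_not_imp_left]
  intro h_comp
  have h_next : encodeCfg c' <+: z := by
    obtain h_le | ⟨s, hs⟩ := or_iff_not_and_not.2 h_comp
    · exact (List.prefix_concat_iff.1 h_le).resolve_left (h_ne c' h z [])
    · exact absurd (by simpa using hs.symm) (h_ne c' h z s)
  obtain ⟨z, rfl⟩ := h_next
  rw [List.append_assoc]
  exact ih _ (by simp [encodeCfg]) h z rfl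

theorem forall_mem_errors_iff {c : Option Q × (K → List Γ)} :
    (∀ z, encodeCfg c ++ (z ++ [.state none]) ∈ M.errors) ↔
      ¬(StateTransition.eval M.step c).Dom :=
  ⟨fun h h_dom => (exists_notMem_errors_of_dom h_dom).elim fun z hz => hz (h z),
    mem_errors_of_not_dom⟩

end Mismatches

end Step

section Window

variable {K Γ Q : Type*}

/-- The constraints under which the variables `Sum.inl a` stand for the letters `a` and the
variables `Sum.inr k` for arbitrary parts of the stacks `k`. -/
def windowConstraint : CfgLetter Γ Q ⊕ K → Language (CfgLetter Γ Q)
  | .inl a => {[a]}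
  | .inr _ => wordsOver (Set.range .letter)

/-- The valuation that assigns the stacks `S` to the variables `Sum.inr k`. -/
def windowValue (S : K → List Γ) : CfgLetter Γ Q ⊕ K → List (CfgLetter Γ Q) :=
  Sum.elim (fun a => [a]) fun k => (S k).map .letter

theorem forall_mem_windowConstraint_iff {x : CfgLetter Γ Q ⊕ K → List (CfgLetter Γ Q)} :
    (∀ t, x t ∈ windowConstraint t) ↔ ∃ S, windowValue S = x := by
  have h_range (w : List (CfgLetter Γ Q)) :
      w ∈ wordsOver (Set.range .letter) ↔ ∃ l, List.map .letter l = w :=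
    (Set.ext_iff.1 (Set.range_list_map CfgLetter.letter) w).symm
  constructor
  · intro hx
    choose S hS using fun k => (h_range _).1 (hx (.inr k))
    exact ⟨S, funext (Sum.rec (fun a => (hx (.inl a)).symm) hS)⟩
  · rintro ⟨S, rfl⟩ (a | k)
    · rfl
    · exact (h_range _).2 ⟨S k, rfl⟩

theorem isRational_windowConstraint [Finite Γ] (t : CfgLetter Γ Q ⊕ K) :
    IsRational (windowConstraint t) := by
  obtain a | _ := t
  · exact isRational_singleton [a]
  · exact isRational_wordsOver (Set.finite_range _)

theorem isSplittable_windowConstraint [Finite Γ] (t : CfgLetter Γ Q ⊕ K) :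
    IsSplittable (windowConstraint t) := by
  obtain a | _ := t
  · exact isSplittable_singleton a
  · exact isSplittable_wordsOver (Set.finite_range _)

variable [Fintype K] [DecidableEq K]

/-- The pattern whose values are the encodings of the configurations with state `q` and stacks
`window k v w S`. -/
noncomputable def windowPattern (q : Option Q) (k : K) (v : Option Γ) (w : List Γ) :
    List (CfgLetter Γ Q ⊕ K) :=
  .inl (.state q) :: joinSep (.inl .bottom) (Finset.univ.toList.map <|
    Function.update (fun j => [.inr j]) k <|
      w.map (fun a => .inl (.letter a)) ++ v.elim [] fun _ => [.inr k])

theorem flatMap_windowPattern (q : Option Q) (k : K) (v : Option Γ) (w : List Γ)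
    (S : K → List Γ) :
    (windowPattern q k v w).flatMap (windowValue S) = encodeCfg (q, window k v w S) := by
  have h_stack (j) : (Function.update (fun j => [.inr j]) k (w.map (fun a => .inl (.letter a)) ++
      v.elim [] fun _ => [.inr k]) j : List (CfgLetter Γ Q ⊕ K)).flatMap (windowValue S) =
        (window k v w S j).map .letter := by
    obtain rfl | hj := eq_or_ne j k
    · cases v <;> simp [window, windowValue, List.flatMap_map, ← List.map_eq_flatMap]
    · simp [window, windowValue, hj]
  have h_letter (a : CfgLetter Γ Q) : windowValue S (.inl a) = [a] := rfl
  simp [windowPattern, encodeCfg, encodeStacks, joinSep, List.flatMap_assoc, List.flatMap_map,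
    h_stack, h_letter]

theorem errors_eq_iSup (M : StackMachine K Γ Q) :
    M.errors = ⨆ (q : Q) (v : Option Γ), ErrLang windowConstraint
      (windowPattern (some q) (M.stack q) v v.toList)
      (windowPattern (M.next q v).1 (M.stack q) v (M.next q v).2) := by
  ext w
  simp only [Language.mem_iSup]
  constructor
  · rintro ⟨c, c', h_step, z, s, h_incomp, rfl⟩
    obtain ⟨q, v, S, rfl, rfl⟩ := step_eq_some_iff.1 h_step
    rw [← flatMap_windowPattern] at h_incomp ⊢
    exact ⟨q, v, windowValue S, forall_mem_windowConstraint_iff.2 ⟨S, rfl⟩, z, s, h_incomp, rfl⟩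
  · rintro ⟨q, v, x, hx, z, s, h_incomp, rfl⟩
    obtain ⟨S, rfl⟩ := forall_mem_windowConstraint_iff.1 hx
    rw [flatMap_windowPattern] at h_incomp ⊢
    exact ⟨_, _, step_eq_some_iff.2 ⟨q, v, S, rfl, rfl⟩, z, s, h_incomp, rfl⟩

theorem isNEUnion_errors [Finite Γ] [Finite Q] (M : StackMachine K Γ Q) : IsNEUnion M.errors := by
  have h_nonempty (t : CfgLetter Γ Q ⊕ K) : Set.Nonempty (windowConstraint t) :=
    ⟨_, forall_mem_windowConstraint_iff.2 ⟨fun _ => [], rfl⟩ t⟩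
  rw [errors_eq_iSup]
  exact .iSup fun q => .iSup fun v => isNEUnion_errLang isRational_windowConstraint h_nonempty
    isSplittable_windowConstraint _ _

end Window

/-! ### Simulation of Turing machines -/

section Restrict

variable {K Γ Q : Type*} [DecidableEq K] (M : StackMachine K Γ Q) (s : Set Q)

open Classical in
/-- The restriction of a machine to the states in `s`, which halts when it would leave `s`. -/
noncomputable def restrict : StackMachine K Γ s where
  stack q := M.stack q
  next q v := ((M.next q v).1.bind fun q' => if h : q' ∈ s then some ⟨q', h⟩ else none,
    (M.next q v).2)

variable {M s}

theorem eval_restrict_dom_iff (hs : ∀ q ∈ s, ∀ v, ∀ q' ∈ (M.next q v).1, q' ∈ s) (q : s)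
    (S : K → List Γ) :
    (StateTransition.eval (M.restrict s).step (some q, S)).Dom ↔
      (StateTransition.eval M.step (some q, S)).Dom := by
  have h_next (q : s) (v : Option Γ) :
      ((M.restrict s).next q v).1.map Subtype.val = (M.next q v).1 := by
    rcases h : (M.next q v).1 with _ | q'
    · simp [restrict, h]
    · simp [restrict, h, hs q q.2 v q' h]
  have h_respects : StateTransition.Respects (M.restrict s).step M.step fun c d =>
      (c.1.map Subtype.val, c.2) = d :=
    StateTransition.fun_respects.2 fun
      | (none, S) => rfl
      | (some q, S) => .single (congrArg (fun o => some (o, _)) (h_next q _).symm)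
  exact (StateTransition.tr_eval_dom h_respects rfl).symm

end Restrict

section TM2

open Turing

variable {K Γ Λ σ : Type*}

/-- The stack used by the first instruction of a statement. -/
def stmtStack [Inhabited K] : TM2.Stmt (fun _ : K => Γ) Λ σ → K
  | .push k _ _ | .peek k _ _ | .pop k _ _ => k
  | _ => default

/-- The effect of the first instruction of a statement, given the top letter `v` of its stack: the
remaining statement, the new variables, and the word that replaces `v`. -/
def stmtNext (M : Λ → TM2.Stmt (fun _ : K => Γ) Λ σ) (v : Option Γ) :
    TM2.Stmt (fun _ : K => Γ) Λ σ → σ → Option (TM2.Stmt (fun _ : K => Γ) Λ σ × σ) × List Γ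
  | .push _ f p, x => (some (p, x), f x :: v.toList)
  | .peek _ f p, x => (some (p, f x v), v.toList)
  | .pop _ f p, x => (some (p, f x v), [])
  | .load f p, x => (some (p, f x), v.toList)
  | .branch f p p', x => (some (cond (f x) p p', x), v.toList)
  | .goto f, x => (some (M (f x), x), v.toList)
  | .halt, _ => (none, v.toList)

/-- The machine that executes the program `M` instruction by instruction. -/
def ofTM2 [Inhabited K] (M : Λ → TM2.Stmt (fun _ : K => Γ) Λ σ) :
    StackMachine K Γ (TM2.Stmt (fun _ : K => Γ) Λ σ × σ) where
  stack q := stmtStack q.1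
  next q v := stmtNext M v q.1 q.2

variable {M : Λ → TM2.Stmt (fun _ : K => Γ) Λ σ}

/-- The configuration of `ofTM2 M` that corresponds to a configuration of the program `M`. -/
def cfgOfTM2 (M : Λ → TM2.Stmt (fun _ : K => Γ) Λ σ) (c : TM2.Cfg (fun _ : K => Γ) Λ σ) :
    Option (TM2.Stmt (fun _ : K => Γ) Λ σ × σ) × (K → List Γ) :=
  (c.l.map fun l => (M l, c.var), c.stk)

theorem mem_stmts_of_mem_stmtNext [Inhabited Λ] {L : Finset Λ} (hL : TM2.Supports M L)
    {q q' : TM2.Stmt (fun _ : K => Γ) Λ σ × σ} (hq : some q.1 ∈ TM2.stmts M L) {v : Option Γ}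
    (h : q' ∈ (stmtNext M v q.1 q.2).1) : some q'.1 ∈ TM2.stmts M L := by
  classical
  obtain ⟨p, x⟩ := q
  cases p with
  | goto f =>
    obtain rfl := Option.some_inj.1 h
    exact Finset.some_mem_insertNone.2 (Finset.mem_biUnion.2
      ⟨f x, TM2.stmts_supportsStmt hL hq x, TM2.stmts₁_self⟩)
  | halt => cases h
  | branch f p₁ p₂ =>
    obtain rfl := Option.some_inj.1 h
    refine TM2.stmts_trans ?_ hq
    cases f x <;> simp [TM2.stmts₁, TM2.stmts₁_self]
  | _ =>
    obtain rfl := Option.some_inj.1 h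
    exact TM2.stmts_trans (by simp [TM2.stmts₁, TM2.stmts₁_self]) hq

variable [DecidableEq K] [Inhabited K]

theorem reaches₁_cfgOfTM2_stepAux (p : TM2.Stmt (fun _ : K => Γ) Λ σ) (x : σ) (S : K → List Γ) :
    StateTransition.Reaches₁ (ofTM2 M).step (some (p, x), S)
      (cfgOfTM2 M (TM2.stepAux p x S)) := by
  have h_step (p : TM2.Stmt (fun _ : K => Γ) Λ σ) (x : σ) {q} (S S' : K → List Γ)
      (h_state : (stmtNext M (S (stmtStack p)).head? p x).1 = q)
      (h_stacks : Function.update S (stmtStack p)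
        ((stmtNext M (S (stmtStack p)).head? p x).2 ++ (S (stmtStack p)).tail) = S') :
      (q, S') ∈ (ofTM2 M).step (some (p, x), S) :=
    congrArg some (Prod.ext h_state h_stacks)
  have h_list (l : List Γ) : l.head?.toList ++ l.tail = l := by cases l <;> rfl
  have h_keep (S : K → List Γ) (k) : Function.update S k ((S k).head?.toList ++ (S k).tail) = S :=
    (congrArg _ (h_list (S k))).trans (Function.update_eq_self k S)
  induction p generalizing x S with
  | push k f p ih =>
    exact .head (h_step _ _ S _ rfl (congrArg (fun l => Function.update S k (f x :: l))
      (h_list (S k)))) (ih _ _)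
  | pop k f p ih => exact .head (h_step _ _ S _ rfl rfl) (ih _ _)
  | peek k f p ih => exact .head (h_step _ _ S S rfl (h_keep S k)) (ih _ S)
  | load f p ih => exact .head (h_step _ _ S S rfl (h_keep S _)) (ih _ S)
  | branch f p p' ih ih' =>
    refine .head (h_step _ _ S S rfl (h_keep S _)) ?_
    cases h : f x
    · simp only [stmtNext, TM2.stepAux, h, cond_false]
      exact ih' x S
    · simp only [stmtNext, TM2.stepAux, h, cond_true]
      exact ih x S
  | goto f => exact .single (h_step _ _ S S rfl (h_keep S _))
  | halt => exact .single (h_step _ _ S S rfl (h_keep S _))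

theorem eval_ofTM2_dom_iff (c : TM2.Cfg (fun _ : K => Γ) Λ σ) :
    (StateTransition.eval (ofTM2 M).step (cfgOfTM2 M c)).Dom ↔
      (StateTransition.eval (TM2.step M) c).Dom := by
  have h_respects : StateTransition.Respects (TM2.step M) (ofTM2 M).step fun c d =>
      cfgOfTM2 M c = d :=
    StateTransition.fun_respects.2 fun
      | ⟨none, x, S⟩ => rfl
      | ⟨some l, x, S⟩ => reaches₁_cfgOfTM2_stepAux (M l) x S
  exact StateTransition.tr_eval_dom h_respects rfl

theorem exists_finite_eval_dom_iff [Inhabited Λ] [Finite σ] {L : Finset Λ}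
    (hL : TM2.Supports M L) (x : σ) : ∃ (s : Set (TM2.Stmt (fun _ : K => Γ) Λ σ × σ))
      (_ : s.Finite) (N : StackMachine K Γ s) (q : s), ∀ S,
      (StateTransition.eval N.step (some q, S)).Dom ↔
        (StateTransition.eval (TM2.step M) ⟨some default, x, S⟩).Dom := by
  classical
  let s : Set (TM2.Stmt (fun _ : K => Γ) Λ σ × σ) := {q | some q.1 ∈ TM2.stmts M L}
  have h_start : (M default, x) ∈ s :=
    Finset.some_mem_insertNone.2 (Finset.mem_biUnion.2 ⟨default, hL.1, TM2.stmts₁_self⟩)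
  refine ⟨s, ?_, (ofTM2 M).restrict s, ⟨_, h_start⟩, fun S => ?_⟩
  · refine (((TM2.stmts M L).finite_toSet.preimage
      (Option.some_injective _).injOn).prod Set.finite_univ).subset fun q hq => ⟨hq, trivial⟩
  · exact (eval_restrict_dom_iff (fun q hq v q' => mem_stmts_of_mem_stmtNext hL hq) _ S).trans
      (eval_ofTM2_dom_iff ⟨some default, x, S⟩)

end TM2

end StackMachine

section Code

open Turing Turing.PartrecToTM2

theorem exists_stackMachine_eval_dom_iff (c : ToPartrec.Code) :
    ∃ (Q : Type) (_ : Finite Q) (N : StackMachine K' Γ' Q) (q : Q), ∀ l,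
      (StateTransition.eval N.step (some q, K'.elim (trList l) [] [] [])).Dom ↔
        (c.eval l).Dom := by
  let : Inhabited Λ' := ⟨trNormal c .halt⟩
  obtain ⟨s, hs, N, q, hN⟩ :=
    StackMachine.exists_finite_eval_dom_iff (tr_supports c .halt) (none : Option Γ')
  refine ⟨s, hs, N, q, fun l => (hN _).trans ?_⟩
  rw [show (⟨some default, none, K'.elim (trList l) [] [] []⟩ : Cfg') = init c l from rfl, tr_eval]
  rfl

theorem trNat_two_pow (n : ℕ) : trNat (2 ^ n) = List.replicate n .bit0 ++ [.bit1] := by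
  induction n with
  | zero => rfl
  | succ n ih =>
    have h_ne : ((2 ^ n : ℕ) : Num) ≠ 0 := by
      exact_mod_cast (Nat.two_pow_pos n).ne'
    have h_bit0 (m : Num) (hm : m ≠ 0) : trNum m.bit0 = .bit0 :: trNum m := by
      cases m with
      | zero => exact absurd rfl hm
      | pos m => rfl
    rw [trNat, pow_succ, mul_two, Nat.cast_add, Num.bit0_of_bit0, h_bit0 _ h_ne, ← trNat, ih]
    rfl

theorem exists_partrec_leftInverse {g : ℕ → ℕ} (hg : Computable g) (h_inj : g.Injective) :
    ∃ f : ℕ →. ℕ, Partrec f ∧ ∀ n, f (g n) = Part.some n := by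
  refine ⟨fun m => Nat.rfind fun n => Part.some (decide (g n = m)), ?_, fun n => ?_⟩
  · exact Partrec.rfind (Computable.partrec (Primrec.eq.decide.to_comp.comp (hg.comp .snd) .fst))
  · refine Part.eq_some_iff.2 (Nat.mem_rfind.2 ⟨by simp, fun hm => ?_⟩)
    simpa using fun h => hm.ne (h_inj h)

theorem exists_not_computablePred_eval_dom {g : ℕ → ℕ} (hg : Computable g)
    (h_inj : g.Injective) :
    ∃ c : ToPartrec.Code, ¬ComputablePred fun n : ℕ => (c.eval [g n]).Dom := by
  obtain ⟨f, hf, hfg⟩ := exists_partrec_leftInverse hg h_inj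
  have h_partrec : Partrec fun m =>
      (f m).bind fun n => (Denumerable.ofNat Nat.Partrec.Code n).eval 0 :=
    hf.bind (Nat.Partrec.Code.eval_part.comp ((Computable.ofNat _).comp .snd) (Computable.const 0))
  obtain ⟨c, hc⟩ := ToPartrec.Code.exists_code
    (Nat.Partrec'.part_iff.2 (h_partrec.comp Primrec.vector_head.to_comp) :
      Nat.Partrec' fun v : List.Vector ℕ 1 => _)
  have h_dom (n : ℕ) :
      (c.eval [g n]).Dom ↔ ((Denumerable.ofNat Nat.Partrec.Code n).eval 0).Dom := by
    rw [show [g n] = (g n ::ᵥ .nil : List.Vector ℕ 1).1 from rfl, hc]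
    simp [hfg]
  refine ⟨c, fun h => ComputablePred.halting_problem 0 ?_⟩
  refine ComputablePred.computable_of_manyOneReducible
    ⟨Encodable.encode, Computable.encode, fun d => ?_⟩ h
  rw [h_dom, Denumerable.ofNat_encode]

end Code

/-! ### The reduction -/

section Reduction

open Turing Turing.PartrecToTM2

instance : Fintype K' :=
  ⟨{.main, .rev, .aux, .stack}, by rintro (_ | _ | _ | _) <;> decide⟩

theorem exists_not_computablePred_le :
    ∃ (Γ : Type) (_ : Finite Γ) (L : Language Γ) (u v : List Γ) (a b : Γ),
      IsNEUnion L ∧ ¬ComputablePred fun n =>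
        ({u} * {[a]} ^ n * ({v} * wordsOver Set.univ * {[b]}) : Language Γ) ≤ L := by
  obtain ⟨c, hc⟩ := exists_not_computablePred_eval_dom
    (Primrec₂.unpaired'.1 Nat.Primrec.pow |>.comp (.const 2) .id).to_comp
    (Nat.pow_right_injective le_rfl)
  obtain ⟨Q, _, N, q, hN⟩ := exists_stackMachine_eval_dom_iff c
  obtain ⟨u, v, huv⟩ :=
    exists_encodeCfg_update_eq (some q) (K'.elim [] [] [] [] : K' → List Γ') .main
  refine ⟨CfgLetter Γ' Q, inferInstance, N.errors, u,
    [.letter .bit1, .letter .cons] ++ v, .letter .bit0, .state none, N.isNEUnion_errors,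
    fun h => hc (h.not.of_eq fun n => not_iff_comm.1 ?_)⟩
  have h_cfg : encodeCfg (some q, K'.elim (trList [2 ^ n]) [] [] []) =
      u ++ List.replicate n (.letter .bit0) ++ ([.letter .bit1, .letter .cons] ++ v) := by
    rw [← K'.elim_update_main (a := []), huv]
    simp [trList, trNat_two_pow]
  rw [← hN, ← N.forall_mem_errors_iff, id, h_cfg, forall_append_mem_iff, singleton_pow]
  simp only [← singleton_mul_singleton, mul_assoc]

theorem langNE_map_inr {σ : Type} (p : List ℕ) (r : ℕ → RegularExpression σ) :
    LangNE (p.map .inr) (constraintOf (p.map fun x => (x, r x))) =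
      Lang p fun x => (r x).matches' := by
  have h_applySub (s : ℕ → List σ) : applySub s (p.map .inr) = p.flatMap s := by
    induction p with
    | nil => rfl
    | cons x p ih => exact congrArg (s x ++ ·) ih
  have h_constraint {x} (hx : x ∈ p) :
      constraintOf (p.map fun x => (x, r x)) x = (r x).matches' := by
    rw [constraintOf, List.lookup_graph r hx]
  have h_vars {x} : x ∈ varsOf (p.map .inr : Pattern σ) ↔ x ∈ p := by
    simp [varsOf]
  ext w
  refine exists_congr fun s => ?_
  rw [h_applySub, ← and_assoc, Valid, ← forall₂_and]
  refine and_congr_left fun _ => forall_congr' fun x => ?_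
  rw [h_vars]
  refine forall_congr' fun hx => ?_
  rw [h_constraint hx]
  rfl

theorem primrec_encRE_mul_pow_mul {σ : Type} [Encodable σ] (A U B : RegularExpression σ) :
    Primrec fun n => encRE (A * U ^ n * B) := by
  have h_pow : Primrec fun n => encRE (U ^ n) := by
    refine (Primrec.nat_rec₁ (encRE (U ^ 0)) (f := fun _ y => Nat.pair 4 (Nat.pair y (encRE U)))
      (Primrec₂.natPair.comp (.const 4) (Primrec₂.natPair.comp .snd (.const _))).to₂).of_eq
      fun n => ?_
    induction n with
    | zero => rfl
    | succ n ih => exact congrArg (fun y => Nat.pair 4 (Nat.pair y (encRE U))) ih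
  have h_mul : Primrec₂ fun x y => Nat.pair 4 (Nat.pair x y) :=
    Primrec₂.natPair.comp (.const 4) (Primrec₂.natPair.comp .fst .snd)
  exact h_mul.comp (h_mul.comp (.const (encRE A)) h_pow) (.const (encRE B))

theorem exists_not_computablePred_langNE_subset {σ : Type} {a b : σ} (hab : a ≠ b) :
    ∃ (A U B : RegularExpression σ) (p : List ℕ) (r : RegConstraint σ),
      ¬ComputablePred fun n => LangNE ([0].map .inr) (constraintOf [(0, A * U ^ n * B)]) ⊆
        LangNE (p.map .inr) (constraintOf r) := by
  obtain ⟨Γ, _, L, u, v, c, d, hL, h_undec⟩ := exists_not_computablePred_le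
  obtain ⟨x, y, h, p, r, hr, hx, h_mem⟩ := hL.exists_mem_lang_iff hab
  choose r' hr' using hr
  obtain ⟨A, hA⟩ := isRational_singleton (x ++ u.flatMap h)
  obtain ⟨U, hU⟩ := isRational_singleton (h c)
  obtain ⟨B, hB⟩ := ((((isRational_singleton v).mul (isRational_wordsOver Set.finite_univ)).mul
    (isRational_singleton [d])).morphImage h).mul (isRational_singleton y)
  refine ⟨A, U, B, p, p.map fun x => (x, r' x), fun h_dec => h_undec (h_dec.of_eq fun n => ?_)⟩
  have h_left : (A * U ^ n * B).matches' =
      {x} * morphImage h ({u} * {[c]} ^ n * ({v} * wordsOver Set.univ * {[d]})) * {y} := by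
    rw [RegularExpression.matches'_mul, RegularExpression.matches'_mul,
      RegularExpression.matches'_pow, hA, hU, hB]
    simp only [morphImage_mul, morphImage_pow, morphImage_singleton, List.flatMap_singleton,
      ← singleton_mul_singleton, mul_assoc]
  have h_nil : [] ∉ (A * U ^ n * B).matches' := by
    rw [h_left, Language.mem_mul]
    rintro ⟨_, ⟨_, rfl, _, _, rfl⟩, _, _, h_nil⟩
    simp [hx] at h_nil
  have h_one : LangNE ([0].map .inr) (constraintOf [(0, A * U ^ n * B)]) =
      (A * U ^ n * B).matches' :=
    (langNE_map_inr [0] fun _ => A * U ^ n * B).trans (lang_singleton h_nil)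
  rw [h_one, langNE_map_inr, funext hr', h_left]
  exact singleton_mul_morphImage_mul_singleton_le_iff h_mem

theorem primrec_encode_singleConstraint {α β : Type*} [Encodable α] [Encodable β] (p : α) (y : β)
    {e : ℕ → ℕ} (he : Primrec e) : Primrec fun n => Encodable.encode ((p, [(0, e n)]), y) :=
  Primrec₂.natPair.comp
    (Primrec₂.natPair.comp (.const (Encodable.encode p))
      (Primrec.encode.comp (Primrec.list_cons.comp (Primrec.pair (.const 0) he) (.const []))))
    (.const (Encodable.encode y))

theorem primrec_encodeInput {σ : Type} [Encodable σ] (p : Pattern σ)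
    (y : Pattern σ × RegConstraint σ) {e : ℕ → RegularExpression σ}
    (he : Primrec fun n => encRE (e n)) :
    Primrec fun n => encodeInput ((p, [(0, e n)]), y) :=
  primrec_encode_singleConstraint p
    (y.1, y.2.map fun q : ℕ × RegularExpression σ => (q.1, encRE q.2)) he

theorem primrec_encodeTFInput {σ : Type} [Encodable σ] (p : TFPattern)
    (y : TFPattern × RegConstraint σ) {e : ℕ → RegularExpression σ}
    (he : Primrec fun n => encRE (e n)) :
    Primrec fun n => encodeTFInput ((p, [(0, e n)]), y) :=
  primrec_encode_singleConstraint p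
    (y.1, y.2.map fun q : ℕ × RegularExpression σ => (q.1, encRE q.2)) he

end Reduction

end PatternInclusion

theorem inclusion_NEPatternRegConstraints_undecidable_general
    (σ : Type) [Encodable σ] [Nontrivial σ] :
    (¬ ∃ f : ℕ → Bool, Computable f ∧
      ∀ inp : (Pattern σ × RegConstraint σ) × (Pattern σ × RegConstraint σ),
        (f (encodeInput inp) = true ↔
          LangNE inp.1.1 (constraintOf inp.1.2) ⊆ LangNE inp.2.1 (constraintOf inp.2.2))) ∧
    (¬ ∃ f : ℕ → Bool, Computable f ∧
      ∀ inp : (TFPattern × RegConstraint σ) × (TFPattern × RegConstraint σ),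
        (f (encodeTFInput inp) = true ↔
          LangNE (inp.1.1.map Sum.inr) (constraintOf inp.1.2) ⊆
            LangNE (inp.2.1.map Sum.inr) (constraintOf inp.2.2))) := by
  obtain ⟨a, b, hab⟩ := exists_pair_ne σ
  obtain ⟨A, U, B, p, r, h_undec⟩ :=
    PatternInclusion.exists_not_computablePred_langNE_subset hab
  have h_primrec := PatternInclusion.primrec_encRE_mul_pow_mul A U B
  constructor
  · rintro ⟨f, hf, h⟩
    have h_comp := PatternInclusion.primrec_encodeInput [.inr 0] (p.map .inr, r) h_primrec
    exact h_undec (ComputablePred.computable_iff.2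
      ⟨_, hf.comp h_comp.to_comp, funext fun n => propext (h ((_, [(0, _)]), (_, _))).symm⟩)
  · rintro ⟨f, hf, h⟩
    have h_comp := PatternInclusion.primrec_encodeTFInput [0] (p, r) h_primrec
    exact h_undec (ComputablePred.computable_iff.2
      ⟨_, hf.comp h_comp.to_comp, funext fun n => propext (h ((_, [(0, _)]), (_, _))).symm⟩)

/-- The inclusion problem for non-erasing pattern languages with regular constraints is
undecidable for every finite alphabet of size at least 2, also when restricted to
terminal-free patterns. -/
theorem inclusion_NEPatternRegConstraints_undecidable
    (σ : Type) [Fintype σ] [Encodable σ] (hcard : 2 ≤ Fintype.card σ) :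
    (¬ ∃ f : ℕ → Bool, Computable f ∧
      ∀ inp : (Pattern σ × RegConstraint σ) × (Pattern σ × RegConstraint σ),
        (f (encodeInput inp) = true ↔
          LangNE inp.1.1 (constraintOf inp.1.2) ⊆ LangNE inp.2.1 (constraintOf inp.2.2))) ∧
    (¬ ∃ f : ℕ → Bool, Computable f ∧
      ∀ inp : (TFPattern × RegConstraint σ) × (TFPattern × RegConstraint σ),
        (f (encodeTFInput inp) = true ↔
          LangNE (inp.1.1.map Sum.inr) (constraintOf inp.1.2) ⊆
            LangNE (inp.2.1.map Sum.inr) (constraintOf inp.2.2))) := by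
  have : Nontrivial σ := Fintype.one_lt_card_iff_nontrivial.1 hcard
  exact inclusion_NEPatternRegConstraints_undecidable_general σ
end
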